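/- arXiv:2007.06148 — 5 statements merged into one kernel-verified Lean document; each statement's English description precedes it below -/
import Mathlib

section
/- Let Ω_SC := {(a₁,a₂) ∈ ℝ² : a₁a₂ = 0} be the switching cone. For every a = (a₁,a₂) ∈ Ω_SC, the tangent cone to Ω_SC at a is given by: T_{Ω_SC}(a) = {0}×ℝ if a₁ = 0 and a₂ ≠ 0; T_{Ω_SC}(a) = Ω_SC if a₁ = a₂ = 0; and T_{Ω_SC}(a) = ℝ×{0} if a₁ ≠ 0 and a₂ = 0. -/
open Filter Topology

/-- The switching cone `Ω_SC = {(a₁, a₂) ∈ ℝ² : a₁ a₂ = 0}`. -/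
def OmegaSC : Set (ℝ × ℝ) := {a | a.1 * a.2 = 0}

/-- The tangent (Bouligand) cone to `A` at `x`:
`{d : ∃ tₖ ↓ 0, dₖ → d with x + tₖ dₖ ∈ A for all k}`. -/
def tangentConeSC (A : Set (ℝ × ℝ)) (x : ℝ × ℝ) : Set (ℝ × ℝ) :=
  {d | ∃ (t : ℕ → ℝ) (dk : ℕ → ℝ × ℝ), (∀ k, 0 < t k) ∧ Tendsto t atTop (𝓝 0) ∧
        Tendsto dk atTop (𝓝 d) ∧ ∀ k, x + t k • dk k ∈ A}

/-- The regular (Fréchet) normal cone to `A` at `x`: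
`{ζ : ⟨ζ, y − x⟩ ≤ o(‖y − x‖) for y ∈ A}`. -/
def frechetNormalSC (A : Set (ℝ × ℝ)) (x : ℝ × ℝ) : Set (ℝ × ℝ) :=
  {z | ∀ ε > (0 : ℝ), ∃ δ > (0 : ℝ), ∀ y ∈ A, ‖y - x‖ < δ →
        z.1 * (y.1 - x.1) + z.2 * (y.2 - x.2) ≤ ε * ‖y - x‖}

/-- The limiting (Mordukhovich) normal cone to `A` at `x`. -/
def limitingNormalSC (A : Set (ℝ × ℝ)) (x : ℝ × ℝ) : Set (ℝ × ℝ) :=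
  {z | ∃ (xk zk : ℕ → ℝ × ℝ), (∀ k, xk k ∈ A) ∧ Tendsto xk atTop (𝓝 x) ∧
        Tendsto zk atTop (𝓝 z) ∧ ∀ k, zk k ∈ frechetNormalSC A (xk k)}

/-- The directional limiting normal cone `N_A(x; d)`. -/
def dirNormalSC (A : Set (ℝ × ℝ)) (x d : ℝ × ℝ) : Set (ℝ × ℝ) :=
  {z | ∃ (t : ℕ → ℝ) (dk zk : ℕ → ℝ × ℝ),
        (∀ k, 0 < t k) ∧ Tendsto t atTop (𝓝 0) ∧ Tendsto dk atTop (𝓝 d) ∧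
        Tendsto zk atTop (𝓝 z) ∧
        ∀ k, x + t k • dk k ∈ A ∧ zk k ∈ frechetNormalSC A (x + t k • dk k)}

/-- The cone `N^i_A(x; d)` from the definition of directional regularity. -/
def dirNormalISC (A : Set (ℝ × ℝ)) (x d : ℝ × ℝ) : Set (ℝ × ℝ) :=
  {z | ∀ t : ℕ → ℝ, (∀ k, 0 < t k) → Tendsto t atTop (𝓝 0) →
        ∃ (dk zk : ℕ → ℝ × ℝ), Tendsto dk atTop (𝓝 d) ∧ Tendsto zk atTop (𝓝 z) ∧
          ∀ k, x + t k • dk k ∈ A ∧ zk k ∈ frechetNormalSC A (x + t k • dk k)}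

theorem aux_mem (a d : ℝ × ℝ) (h : ∀ t : ℝ, a + t • d ∈ OmegaSC) :
    d ∈ tangentConeSC OmegaSC a :=
  ⟨fun k => 1 / ((k : ℝ) + 1), fun _ => d, fun k => by positivity,
    tendsto_one_div_add_atTop_nhds_zero_nat, tendsto_const_nhds, fun k => h _⟩

theorem aux_lim (a d : ℝ × ℝ) (ha : a ∈ OmegaSC) (hd : d ∈ tangentConeSC OmegaSC a) :
    a.1 * d.2 + a.2 * d.1 = 0 := by
  obtain ⟨t, dk, ht, ht0, hdk, hk⟩ := hd
  have h1 := (continuous_fst.tendsto d).comp hdk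
  have h2 := (continuous_snd.tendsto d).comp hdk
  have h := ((h2.const_mul a.1).add (h1.const_mul a.2)).add ((ht0.mul h1).mul h2)
  have e : ∀ k, a.1 * (dk k).2 + a.2 * (dk k).1 + t k * (dk k).1 * (dk k).2 = 0 := by
    intro k
    have := hk k
    simp only [OmegaSC, Set.mem_setOf_eq, Prod.fst_add, Prod.snd_add, Prod.smul_fst,
      Prod.smul_snd, smul_eq_mul] at this ha
    apply mul_left_cancel₀ (ht k).ne'
    linear_combination this - ha
  have h3 := tendsto_nhds_unique (h.congr e) tendsto_const_nhds
  linarith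

/-- the tangent cone to the switching cone. -/
theorem tangentCone_omegaSC (a : ℝ × ℝ) (ha : a ∈ OmegaSC) :
    (a.1 = 0 ∧ a.2 ≠ 0 → tangentConeSC OmegaSC a = {d : ℝ × ℝ | d.1 = 0}) ∧
    (a.1 = 0 ∧ a.2 = 0 → tangentConeSC OmegaSC a = OmegaSC) ∧
    (a.1 ≠ 0 ∧ a.2 = 0 → tangentConeSC OmegaSC a = {d : ℝ × ℝ | d.2 = 0}) := by
  refine ⟨fun ⟨h1, h2⟩ => ?_, fun ⟨h1, h2⟩ => ?_, fun ⟨h1, h2⟩ => ?_⟩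
  · ext d
    refine ⟨fun hd => ?_, fun hd => aux_mem a d fun t => ?_⟩
    · have := aux_lim a d ha hd
      simpa [h1, h2] using this
    · have hd' : d.1 = 0 := hd
      simp [OmegaSC, h1, hd']
  · ext d
    refine ⟨fun hd => ?_, fun hd => aux_mem a d fun t => ?_⟩
    · obtain ⟨t, dk, ht, ht0, hdk, hk⟩ := hd
      have c : IsClosed OmegaSC :=
        isClosed_eq (continuous_fst.mul continuous_snd) continuous_const
      refine c.mem_of_tendsto hdk (Eventually.of_forall fun k => ?_)
      have := hk k
      simpa [OmegaSC, h1, h2, (ht k).ne'] using this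
    · have hd' : d.1 * d.2 = 0 := hd
      simp only [OmegaSC, Set.mem_setOf_eq, Prod.fst_add, Prod.snd_add, Prod.smul_fst,
        Prod.smul_snd, smul_eq_mul, h1, h2]
      linear_combination t ^ 2 * hd'
  · ext d
    refine ⟨fun hd => ?_, fun hd => aux_mem a d fun t => ?_⟩
    · have := aux_lim a d ha hd
      simpa [h1, h2] using this
    · have hd' : d.2 = 0 := hd
      simp [OmegaSC, h2, hd']
end

section
/- Let Ω_SC := {(a₁,a₂) ∈ ℝ² : a₁a₂ = 0} be the switching cone. For every a = (a₁,a₂) ∈ Ω_SC and every direction d = (d₁,d₂) ∈ ℝ², one has N_{Ω_SC}(a; d) = N^i_{Ω_SC}(a; d) (so Ω_SC is directionally regular), and this common cone equals: ℝ×{0} if a₁ = 0, a₂ ≠ 0, d₁ = 0; {0}×ℝ if a₁ ≠ 0, a₂ = 0, d₂ = 0; ℝ×{0} if a₁ = a₂ = 0, d₁ = 0, d₂ ≠ 0; {0}×ℝ if a₁ = a₂ = 0, d₁ ≠ 0, d₂ = 0; Ω_SC if a₁ = a₂ = d₁ = d₂ = 0; and the empty set in all remaining cases (i.e., when d does not belong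 to the tangent cone of Ω_SC at a). -/
open Filter Topology

theorem fr_fwd (x z : ℝ × ℝ) (hx : x.1 = 0) (hz : z ∈ frechetNormalSC OmegaSC x) : z.2 = 0 := by
  by_contra h
  have hp : 0 < |z.2| := abs_pos.mpr h
  obtain ⟨δ, hδ, H⟩ := hz (|z.2| / 2) (by positivity)
  set s : ℝ := δ / (2 * |z.2|) with hs
  have hs0 : 0 < s := by positivity
  have hsz : s * |z.2| = δ / 2 := by rw [hs]; field_simp
  have hn : ‖((x.1, x.2 + s * z.2) : ℝ × ℝ) - x‖ = s * |z.2| := by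
    rw [Prod.norm_def]
    simp [abs_mul, abs_of_pos hs0]
    positivity
  have := H (x.1, x.2 + s * z.2) (by simp [OmegaSC, hx]) (by rw [hn, hsz]; linarith)
  rw [hn] at this
  simp only [sub_self, mul_zero, zero_add, add_sub_cancel_left] at this
  have h2 : z.2 * (s * z.2) = s * (|z.2| * |z.2|) := by rw [abs_mul_abs_self]; ring
  rw [h2] at this
  nlinarith [mul_pos hs0 (mul_pos hp hp)]

theorem fr_bwd (x z : ℝ × ℝ) (hx : x.1 = 0) (hx2 : x.2 ≠ 0) (hz : z.2 = 0) :
    z ∈ frechetNormalSC OmegaSC x := by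
  intro ε hε
  refine ⟨|x.2|, abs_pos.mpr hx2, fun y hy hyx => ?_⟩
  have h1 : |y.2 - x.2| < |x.2| := lt_of_le_of_lt (norm_snd_le (y - x)) hyx
  have h2 : y.2 ≠ 0 := by
    intro h; rw [h] at h1; simp at h1
  have h3 : y.1 = 0 := (mul_eq_zero.mp hy).resolve_right h2
  rw [h3, hx, hz]
  simp
  positivity

theorem omega_swap {x : ℝ × ℝ} (h : x ∈ OmegaSC) : x.swap ∈ OmegaSC := by
  simp only [OmegaSC, Set.mem_setOf_eq, Prod.fst_swap, Prod.snd_swap] at *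
  linarith [mul_comm x.1 x.2]

theorem norm_swapSC (x : ℝ × ℝ) : ‖x.swap‖ = ‖x‖ := by
  simp [Prod.norm_def, max_comm]

theorem fr_swap {x z : ℝ × ℝ} (h : z ∈ frechetNormalSC OmegaSC x) :
    z.swap ∈ frechetNormalSC OmegaSC x.swap := by
  intro ε hε
  obtain ⟨δ, hδ, H⟩ := h ε hε
  refine ⟨δ, hδ, fun y hy hn => ?_⟩
  have e : ‖y.swap - x‖ = ‖y - x.swap‖ := by
    rw [← norm_swapSC (y - x.swap)]; simp
  have := H y.swap (omega_swap hy) (by rwa [e])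
  rw [e] at this
  simp only [Prod.fst_swap, Prod.snd_swap] at *
  linarith

theorem pt_swap (a d : ℝ × ℝ) (t : ℝ) : a.swap + t • d.swap = (a + t • d).swap := by
  ext <;> simp

theorem tendsto_swapSC {u : ℕ → ℝ × ℝ} {d : ℝ × ℝ} (h : Tendsto u atTop (𝓝 d)) :
    Tendsto (fun k => (u k).swap) atTop (𝓝 d.swap) :=
  (continuous_swap.tendsto d).comp h

theorem dir_swap {a d z : ℝ × ℝ} (h : z ∈ dirNormalSC OmegaSC a d) :
    z.swap ∈ dirNormalSC OmegaSC a.swap d.swap := by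
  obtain ⟨t, dk, zk, h1, h2, h3, h4, h5⟩ := h
  refine ⟨t, fun k => (dk k).swap, fun k => (zk k).swap, h1, h2, tendsto_swapSC h3,
    tendsto_swapSC h4, fun k => ?_⟩
  rw [pt_swap]
  exact ⟨omega_swap (h5 k).1, fr_swap (h5 k).2⟩

theorem dirI_swap {a d z : ℝ × ℝ} (h : z ∈ dirNormalISC OmegaSC a d) :
    z.swap ∈ dirNormalISC OmegaSC a.swap d.swap := by
  intro t h1 h2
  obtain ⟨dk, zk, h3, h4, h5⟩ := h t h1 h2
  refine ⟨fun k => (dk k).swap, fun k => (zk k).swap, tendsto_swapSC h3,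
    tendsto_swapSC h4, fun k => ?_⟩
  rw [pt_swap]
  exact ⟨omega_swap (h5 k).1, fr_swap (h5 k).2⟩

theorem dirI_sub {a d z : ℝ × ℝ} (h : z ∈ dirNormalISC OmegaSC a d) :
    z ∈ dirNormalSC OmegaSC a d := by
  obtain ⟨dk, zk, h3, h4, h5⟩ := h (fun k => 1 / ((k : ℝ) + 1)) (fun k => by positivity)
    tendsto_one_div_add_atTop_nhds_zero_nat
  exact ⟨_, dk, zk, fun k => by positivity, tendsto_one_div_add_atTop_nhds_zero_nat, h3, h4, h5⟩

theorem upper0 {a d z : ℝ × ℝ} (h : z ∈ dirNormalSC OmegaSC a d) : z ∈ OmegaSC := by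
  obtain ⟨t, dk, zk, h1, h2, h3, h4, h5⟩ := h
  have hc : IsClosed OmegaSC :=
    isClosed_eq (continuous_fst.mul continuous_snd) continuous_const
  refine hc.mem_of_tendsto h4 (Eventually.of_forall fun k => ?_)
  rcases mul_eq_zero.mp (h5 k).1 with h | h
  · exact mul_eq_zero_of_right _ (fr_fwd _ _ h (h5 k).2)
  · exact mul_eq_zero_of_left (fr_fwd _ _ h (fr_swap (h5 k).2)) _

theorem upper1 {a d z : ℝ × ℝ} (h : z ∈ dirNormalSC OmegaSC a d) (ha1 : a.1 = 0)
    (ha : a.2 ≠ 0 ∨ (a.2 = 0 ∧ d.2 ≠ 0)) : z.2 = 0 ∧ d.1 = 0 := by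
  obtain ⟨t, dk, zk, h1, h2, h3, h4, h5⟩ := h
  have h31 : Tendsto (fun k => (dk k).1) atTop (𝓝 d.1) := (continuous_fst.tendsto d).comp h3
  have h32 : Tendsto (fun k => (dk k).2) atTop (𝓝 d.2) := (continuous_snd.tendsto d).comp h3
  have h42 : Tendsto (fun k => (zk k).2) atTop (𝓝 z.2) := (continuous_snd.tendsto z).comp h4
  have ev : ∀ᶠ k in atTop, a.2 + t k * (dk k).2 ≠ 0 := by
    rcases ha with ha | ⟨ha, hd⟩
    · have : Tendsto (fun k => a.2 + t k * (dk k).2) atTop (𝓝 (a.2 + 0 * d.2)) :=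
        tendsto_const_nhds.add (h2.mul h32)
      exact this.eventually_ne (by simpa using ha)
    · filter_upwards [h32.eventually_ne hd] with k hk
      rw [ha, zero_add]
      exact mul_ne_zero (h1 k).ne' hk
  have ev2 : ∀ᶠ k in atTop, (a + t k • dk k).1 = 0 := by
    filter_upwards [ev] with k hk
    exact (mul_eq_zero.mp (h5 k).1).resolve_right (by simpa using hk)
  constructor
  · refine tendsto_nhds_unique h42 (tendsto_const_nhds.congr' ?_)
    filter_upwards [ev2] with k hk
    exact (fr_fwd _ _ hk (h5 k).2).symm
  · refine tendsto_nhds_unique h31 (tendsto_const_nhds.congr' ?_)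
    filter_upwards [ev2] with k hk
    simp only [Prod.fst_add, Prod.smul_fst, smul_eq_mul, ha1, zero_add] at hk
    exact ((mul_eq_zero.mp hk).resolve_left (h1 k).ne').symm

theorem lower1 {a d z : ℝ × ℝ} (ha : a.1 = 0) (hd : d.1 = 0) (hz : z.2 = 0) :
    z ∈ dirNormalISC OmegaSC a d := by
  classical
  intro t h1 h2
  let e : ℕ → ℝ := fun k => if a.2 + t k * d.2 = 0 then 1 / ((k : ℝ) + 1) else 0
  have he : Tendsto e atTop (𝓝 0) := by
    refine squeeze_zero (fun k => ?_) (fun k => ?_)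
      (tendsto_one_div_add_atTop_nhds_zero_nat (𝕜 := ℝ))
    · simp only [e]; split_ifs <;> positivity
    · simp only [e]; split_ifs
      · exact le_rfl
      · positivity
  have hne : ∀ k, a.2 + t k * (d.2 + e k) ≠ 0 := by
    intro k
    simp only [e]
    split_ifs with h
    · have : 0 < t k * (1 / ((k : ℝ) + 1)) := mul_pos (h1 k) (by positivity)
      intro h'
      linarith [mul_add (t k) d.2 (1 / ((k : ℝ) + 1))]
    · simpa using h
  refine ⟨fun k => (0, d.2 + e k), fun _ => z, ?_, tendsto_const_nhds, fun k => ?_⟩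
  · have : d = (0, d.2 + 0) := by ext <;> simp [hd]
    rw [this]
    exact tendsto_const_nhds.prodMk_nhds (by simpa using tendsto_const_nhds.add he)
  · have hx : (a + t k • ((0, d.2 + e k) : ℝ × ℝ)).1 = 0 := by simp [ha]
    exact ⟨mul_eq_zero_of_left hx _, fr_bwd _ _ hx (by simpa using hne k) hz⟩

theorem upper2 {a d z : ℝ × ℝ} (h : z ∈ dirNormalSC OmegaSC a d) (ha1 : a.2 = 0)
    (ha : a.1 ≠ 0 ∨ (a.1 = 0 ∧ d.1 ≠ 0)) : z.1 = 0 ∧ d.2 = 0 :=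
  upper1 (dir_swap h) ha1 ha

theorem lower2 {a d z : ℝ × ℝ} (ha : a.2 = 0) (hd : d.2 = 0) (hz : z.1 = 0) :
    z ∈ dirNormalISC OmegaSC a d := by
  have : z.swap ∈ dirNormalISC OmegaSC a.swap d.swap := lower1 ha hd hz
  simpa using dirI_swap this

/-- the switching cone is directionally regular, and its directional
limiting normal cone is given by the indicated case analysis. -/
theorem dirNormal_omegaSC (a : ℝ × ℝ) (ha : a ∈ OmegaSC) (d : ℝ × ℝ) :
    dirNormalSC OmegaSC a d = dirNormalISC OmegaSC a d ∧
    (a.1 = 0 ∧ a.2 ≠ 0 ∧ d.1 = 0 → dirNormalSC OmegaSC a d = {z : ℝ × ℝ | z.2 = 0}) ∧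
    (a.1 ≠ 0 ∧ a.2 = 0 ∧ d.2 = 0 → dirNormalSC OmegaSC a d = {z : ℝ × ℝ | z.1 = 0}) ∧
    (a.1 = 0 ∧ a.2 = 0 ∧ d.1 = 0 ∧ d.2 ≠ 0 →
      dirNormalSC OmegaSC a d = {z : ℝ × ℝ | z.2 = 0}) ∧
    (a.1 = 0 ∧ a.2 = 0 ∧ d.1 ≠ 0 ∧ d.2 = 0 →
      dirNormalSC OmegaSC a d = {z : ℝ × ℝ | z.1 = 0}) ∧
    (a.1 = 0 ∧ a.2 = 0 ∧ d.1 = 0 ∧ d.2 = 0 → dirNormalSC OmegaSC a d = OmegaSC) ∧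
    (¬(a.1 = 0 ∧ a.2 ≠ 0 ∧ d.1 = 0) ∧ ¬(a.1 ≠ 0 ∧ a.2 = 0 ∧ d.2 = 0) ∧
      ¬(a.1 = 0 ∧ a.2 = 0 ∧ d.1 = 0 ∧ d.2 ≠ 0) ∧
      ¬(a.1 = 0 ∧ a.2 = 0 ∧ d.1 ≠ 0 ∧ d.2 = 0) ∧
      ¬(a.1 = 0 ∧ a.2 = 0 ∧ d.1 = 0 ∧ d.2 = 0) →
      dirNormalSC OmegaSC a d = ∅) := by
  refine ⟨?_, ?_, ?_, ?_, ?_, ?_, ?_⟩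
  · ext z
    refine ⟨fun h => ?_, dirI_sub⟩
    by_cases a1 : a.1 = 0
    · by_cases a2 : a.2 = 0
      · by_cases d2 : d.2 = 0
        · by_cases d1 : d.1 = 0
          · rcases mul_eq_zero.mp (upper0 h) with hz | hz
            · exact lower2 a2 d2 hz
            · exact lower1 a1 d1 hz
          · exact lower2 a2 d2 (upper2 h a2 (Or.inr ⟨a1, d1⟩)).1
        · obtain ⟨hz, d1⟩ := upper1 h a1 (Or.inr ⟨a2, d2⟩)
          exact lower1 a1 d1 hz
      · obtain ⟨hz, d1⟩ := upper1 h a1 (Or.inl a2)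
        exact lower1 a1 d1 hz
    · have a2 : a.2 = 0 := (mul_eq_zero.mp ha).resolve_left a1
      obtain ⟨hz, d2⟩ := upper2 h a2 (Or.inl a1)
      exact lower2 a2 d2 hz
  · rintro ⟨a1, a2, d1⟩
    ext z
    exact ⟨fun h => (upper1 h a1 (Or.inl a2)).1, fun h => dirI_sub (lower1 a1 d1 h)⟩
  · rintro ⟨a1, a2, d2⟩
    ext z
    exact ⟨fun h => (upper2 h a2 (Or.inl a1)).1, fun h => dirI_sub (lower2 a2 d2 h)⟩
  · rintro ⟨a1, a2, d1, d2⟩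
    ext z
    exact ⟨fun h => (upper1 h a1 (Or.inr ⟨a2, d2⟩)).1, fun h => dirI_sub (lower1 a1 d1 h)⟩
  · rintro ⟨a1, a2, d1, d2⟩
    ext z
    exact ⟨fun h => (upper2 h a2 (Or.inr ⟨a1, d1⟩)).1, fun h => dirI_sub (lower2 a2 d2 h)⟩
  · rintro ⟨a1, a2, d1, d2⟩
    ext z
    refine ⟨upper0, fun h => ?_⟩
    rcases mul_eq_zero.mp h with hz | hz
    · exact dirI_sub (lower2 a2 d2 hz)
    · exact dirI_sub (lower1 a1 d1 hz)
  · rintro ⟨n1, n2, n3, n4, n5⟩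
    refine Set.eq_empty_of_forall_notMem fun z h => ?_
    by_cases a1 : a.1 = 0
    · by_cases a2 : a.2 = 0
      · by_cases d2 : d.2 = 0
        · by_cases d1 : d.1 = 0
          · exact n5 ⟨a1, a2, d1, d2⟩
          · exact n4 ⟨a1, a2, d1, d2⟩
        · exact n3 ⟨a1, a2, (upper1 h a1 (Or.inr ⟨a2, d2⟩)).2, d2⟩
      · exact n1 ⟨a1, a2, (upper1 h a1 (Or.inl a2)).2⟩
    · have a2 : a.2 = 0 := (mul_eq_zero.mp ha).resolve_left a1
      exact n2 ⟨a1, a2, (upper2 h a2 (Or.inl a1)).2⟩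
end

section
/- Let z* be a local minimizer of the MPSC which is AM-regular. Then z* is M-stationary: there exist multipliers (λ^g, λ^h, λ^G, λ^H) with 0 = ∇f(z*) + Σ_{i∈I_g*} λ_i^g ∇g_i(z*) + Σ_{j=1}^q λ_j^h ∇h_j(z*) + Σ_{i=1}^m (λ_i^G ∇G_i(z*) + λ_i^H ∇H_i(z*)), λ_i^g ≥ 0 for i ∈ I_g*, λ_i^G = 0 for i ∈ I_H*, λ_i^H = 0 for i ∈ I_G*, and λ_i^G λ_i^H = 0 for all i ∈ I_GH*. -/
open scoped Classical InnerProductSpace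
open Filter Topology

noncomputable section

/-- Euclidean space `ℝⁿ`. -/
abbrev Euc (n : ℕ) : Type := EuclideanSpace ℝ (Fin n)

/-- Data of a mathematical program with switching constraints (MPSC):
`min f(z)` s.t. `g(z) ≤ 0`, `h(z) = 0`, `Gᵢ(z)Hᵢ(z) = 0 (i = 1,…,m)`,
with all defining functions continuously differentiable (gradients `f'`, `g'`, … are
genuine gradient maps, and they are continuous). -/
structure MPSC (n p q m : ℕ) where
  f : Euc n → ℝ
  g : Fin p → Euc n → ℝ
  h : Fin q → Euc n → ℝ
  G : Fin m → Euc n → ℝ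
  H : Fin m → Euc n → ℝ
  f' : Euc n → Euc n
  g' : Fin p → Euc n → Euc n
  h' : Fin q → Euc n → Euc n
  G' : Fin m → Euc n → Euc n
  H' : Fin m → Euc n → Euc n
  grad_f : ∀ z, HasGradientAt f (f' z) z
  grad_g : ∀ i z, HasGradientAt (g i) (g' i z) z
  grad_h : ∀ j z, HasGradientAt (h j) (h' j z) z
  grad_G : ∀ i z, HasGradientAt (G i) (G' i z) z
  grad_H : ∀ i z, HasGradientAt (H i) (H' i z) z
  cont_f' : Continuous f'
  cont_g' : ∀ i, Continuous (g' i)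
  cont_h' : ∀ j, Continuous (h' j)
  cont_G' : ∀ i, Continuous (G' i)
  cont_H' : ∀ i, Continuous (H' i)

namespace MPSC

variable {n p q m : ℕ} (P : MPSC n p q m)

/-- The feasible region `F` of the MPSC. -/
def Feas : Set (Euc n) :=
  {z | (∀ i, P.g i z ≤ 0) ∧ (∀ j, P.h j z = 0) ∧ ∀ i, P.G i z * P.H i z = 0}

/-- Active inequality constraints `I_g*`. -/
def Ig (zs : Euc n) : Set (Fin p) := {i | P.g i zs = 0}

/-- `I_G* = {i : Gᵢ(z*) = 0, Hᵢ(z*) ≠ 0}`. -/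
def IGs (zs : Euc n) : Set (Fin m) := {i | P.G i zs = 0 ∧ P.H i zs ≠ 0}

/-- `I_H* = {i : Gᵢ(z*) ≠ 0, Hᵢ(z*) = 0}`. -/
def IHs (zs : Euc n) : Set (Fin m) := {i | P.G i zs ≠ 0 ∧ P.H i zs = 0}

/-- `I_GH* = {i : Gᵢ(z*) = Hᵢ(z*) = 0}`. -/
def IGH (zs : Euc n) : Set (Fin m) := {i | P.G i zs = 0 ∧ P.H i zs = 0}

/-- `I_g*(d)`. -/
def Igd (zs d : Euc n) : Set (Fin p) := {i | P.g i zs = 0 ∧ ⟪P.g' i zs, d⟫_ℝ = 0}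

/-- `I_G*(d)`. -/
def IGd (zs d : Euc n) : Set (Fin m) :=
  {i | i ∈ P.IGH zs ∧ ⟪P.G' i zs, d⟫_ℝ = 0 ∧ ⟪P.H' i zs, d⟫_ℝ ≠ 0}

/-- `I_H*(d)`. -/
def IHd (zs d : Euc n) : Set (Fin m) :=
  {i | i ∈ P.IGH zs ∧ ⟪P.G' i zs, d⟫_ℝ ≠ 0 ∧ ⟪P.H' i zs, d⟫_ℝ = 0}

/-- `I_GH*(d)`. -/
def IGHd (zs d : Euc n) : Set (Fin m) :=
  {i | i ∈ P.IGH zs ∧ ⟪P.G' i zs, d⟫_ℝ = 0 ∧ ⟪P.H' i zs, d⟫_ℝ = 0}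

/-- The linearization cone `L(z*)` of the MPSC at `z*`. -/
def LinCone (zs : Euc n) : Set (Euc n) :=
  {d | (∀ i ∈ P.Ig zs, ⟪P.g' i zs, d⟫_ℝ ≤ 0) ∧ (∀ j, ⟪P.h' j zs, d⟫_ℝ = 0) ∧
       (∀ i ∈ P.IGs zs, ⟪P.G' i zs, d⟫_ℝ = 0) ∧ (∀ i ∈ P.IHs zs, ⟪P.H' i zs, d⟫_ℝ = 0) ∧
       (∀ i ∈ P.IGH zs, ⟪P.G' i zs, d⟫_ℝ * ⟪P.H' i zs, d⟫_ℝ = 0)}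

/-- The critical cone `C(z*)`. -/
def Crit (zs : Euc n) : Set (Euc n) := {d ∈ P.LinCone zs | ⟪P.f' zs, d⟫_ℝ ≤ 0}

/-- `(λ^g, λ^h, λ^G, λ^H)` is an M-multiplier in direction `d` at `z*`. -/
def IsMMultDir (zs d : Euc n) (lg : Fin p → ℝ) (lh : Fin q → ℝ) (lG lH : Fin m → ℝ) : Prop :=
  ((0 : Euc n) = P.f' zs
      + (∑ i ∈ Finset.univ.filter (fun i => i ∈ P.Igd zs d), lg i • P.g' i zs)
      + (∑ j, lh j • P.h' j zs) + (∑ i, (lG i • P.G' i zs + lH i • P.H' i zs))) ∧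
  (∀ i ∈ P.Igd zs d, 0 ≤ lg i) ∧ (∀ i ∉ P.Igd zs d, lg i = 0) ∧
  (∀ i, i ∈ P.IHs zs ∪ P.IHd zs d → lG i = 0) ∧
  (∀ i, i ∈ P.IGs zs ∪ P.IGd zs d → lH i = 0) ∧
  ∀ i ∈ P.IGHd zs d, lG i * lH i = 0

/-- `z*` is M-stationary in direction `d`. -/
def MStatDir (zs d : Euc n) : Prop :=
  ∃ (lg : Fin p → ℝ) (lh : Fin q → ℝ) (lG lH : Fin m → ℝ), P.IsMMultDir zs d lg lh lG lH

/-- `z*` is S-stationary in direction `d`. -/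
def SStatDir (zs d : Euc n) : Prop :=
  ∃ (lg : Fin p → ℝ) (lh : Fin q → ℝ) (lG lH : Fin m → ℝ),
    P.IsMMultDir zs d lg lh lG lH ∧ ∀ i ∈ P.IGHd zs d, lG i = 0 ∧ lH i = 0

/-- MPSC-LICQ in direction `d` at `z*`. -/
def LICQd (zs d : Euc n) : Prop :=
  LinearIndependent ℝ
    (Sum.elim (fun i : {i // i ∈ P.Igd zs d} => P.g' i.1 zs)
      (Sum.elim (fun j : Fin q => P.h' j zs)
        (Sum.elim (fun i : {i // i ∈ P.IGs zs ∪ P.IGd zs d ∪ P.IGHd zs d} => P.G' i.1 zs)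
          (fun i : {i // i ∈ P.IHs zs ∪ P.IHd zs d ∪ P.IGHd zs d} => P.H' i.1 zs))))

/-- MPSC-LICQ at `z*`. -/
def LICQ (zs : Euc n) : Prop :=
  LinearIndependent ℝ
    (Sum.elim (fun i : {i // i ∈ P.Ig zs} => P.g' i.1 zs)
      (Sum.elim (fun j : Fin q => P.h' j zs)
        (Sum.elim (fun i : {i // i ∈ P.IGs zs ∪ P.IGH zs} => P.G' i.1 zs)
          (fun i : {i // i ∈ P.IHs zs ∪ P.IGH zs} => P.H' i.1 zs))))

/-- MPSC quasi-normality at `z*` in direction `d`. -/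
def QuasiNormalDir (zs d : Euc n) : Prop :=
  ∀ (lg : Fin p → ℝ) (lh : Fin q → ℝ) (lG lH : Fin m → ℝ),
    ((0 : Euc n) = (∑ i, lg i • P.g' i zs) + (∑ j, lh j • P.h' j zs)
        + (∑ i, (lG i • P.G' i zs + lH i • P.H' i zs))) →
    ((∀ i ∈ P.Igd zs d, 0 ≤ lg i) ∧ (∀ i ∉ P.Igd zs d, lg i = 0) ∧
      (∀ i, i ∈ P.IGs zs ∪ P.IGd zs d → lH i = 0) ∧
      (∀ i, i ∈ P.IHs zs ∪ P.IHd zs d → lG i = 0) ∧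
      ∀ i ∈ P.IGHd zs d, lG i * lH i = 0) →
    (∃ (dk : ℕ → Euc n) (t : ℕ → ℝ),
      Tendsto dk atTop (𝓝 d) ∧ (∀ k, 0 < t k) ∧ Tendsto t atTop (𝓝 0) ∧
      ∀ k, (∀ i, lg i ≠ 0 → 0 < lg i * P.g i (zs + t k • dk k)) ∧
        (∀ j, lh j ≠ 0 → 0 < lh j * P.h j (zs + t k • dk k)) ∧
        (∀ i, lG i ≠ 0 → 0 < lG i * P.G i (zs + t k • dk k)) ∧
        (∀ i, lH i ≠ 0 → 0 < lH i * P.H i (zs + t k • dk k))) →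
    lg = 0 ∧ lh = 0 ∧ lG = 0 ∧ lH = 0

/-- MPSC directional quasi-normality at `z*`: quasi-normality in every direction of
the linearization cone. -/
def DirQuasiNormal (zs : Euc n) : Prop := ∀ d ∈ P.LinCone zs, P.QuasiNormalDir zs d

/-- `(λ^g, λ^h, λ^G, λ^H)` is an S-multiplier at `z*` (S-stationarity conditions). -/
def IsSMult (zs : Euc n) (lg : Fin p → ℝ) (lh : Fin q → ℝ) (lG lH : Fin m → ℝ) : Prop :=
  ((0 : Euc n) = P.f' zs
      + (∑ i ∈ Finset.univ.filter (fun i => i ∈ P.Ig zs), lg i • P.g' i zs)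
      + (∑ j, lh j • P.h' j zs) + (∑ i, (lG i • P.G' i zs + lH i • P.H' i zs))) ∧
  (∀ i ∈ P.Ig zs, 0 ≤ lg i) ∧ (∀ i ∈ P.IHs zs, lG i = 0) ∧ (∀ i ∈ P.IGs zs, lH i = 0) ∧
  ∀ i ∈ P.IGH zs, lG i = 0 ∧ lH i = 0

/-- `(λ^g, λ^h, λ^G, λ^H)` is an M-multiplier at `z*` (M-stationarity conditions). -/
def IsMMult (zs : Euc n) (lg : Fin p → ℝ) (lh : Fin q → ℝ) (lG lH : Fin m → ℝ) : Prop :=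
  ((0 : Euc n) = P.f' zs
      + (∑ i ∈ Finset.univ.filter (fun i => i ∈ P.Ig zs), lg i • P.g' i zs)
      + (∑ j, lh j • P.h' j zs) + (∑ i, (lG i • P.G' i zs + lH i • P.H' i zs))) ∧
  (∀ i ∈ P.Ig zs, 0 ≤ lg i) ∧ (∀ i ∈ P.IHs zs, lG i = 0) ∧ (∀ i ∈ P.IGs zs, lH i = 0) ∧
  ∀ i ∈ P.IGH zs, lG i * lH i = 0

/-- The rank `r(z*; d)` of the relevant family of gradients. -/
def rankd (zs d : Euc n) : ℕ :=
  Set.finrank ℝ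
    ((fun i => P.g' i zs) '' P.Igd zs d ∪ Set.range (fun j => P.h' j zs) ∪
      (fun i => P.G' i zs) '' (P.IGs zs ∪ P.IGd zs d ∪ P.IGHd zs d) ∪
      (fun i => P.H' i zs) '' (P.IHs zs ∪ P.IHd zs d ∪ P.IGHd zs d))

/-- `(J_g, J_G, J_H)` is an MPSC working set in direction `d`. -/
def IsWorkingSet (zs d : Euc n) (Jg : Finset (Fin p)) (JG JH : Finset (Fin m)) : Prop :=
  (∀ i ∈ Jg, i ∈ P.Igd zs d) ∧
  (∀ i ∈ JG, i ∈ P.IGs zs ∪ P.IGd zs d ∪ P.IGHd zs d) ∧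
  (∀ i ∈ JH, i ∈ P.IHs zs ∪ P.IHd zs d ∪ P.IGHd zs d) ∧
  JG ∪ JH = Finset.univ ∧
  Jg.card + q + JG.card + JH.card = P.rankd zs d ∧
  LinearIndependent ℝ
    (Sum.elim (fun i : {i // i ∈ Jg} => P.g' i.1 zs)
      (Sum.elim (fun j : Fin q => P.h' j zs)
        (Sum.elim (fun i : {i // i ∈ JG} => P.G' i.1 zs)
          (fun i : {i // i ∈ JH} => P.H' i.1 zs))))

/-- `z*` is strongly M-stationary in direction `d`. -/
def StronglyMStatDir (zs d : Euc n) : Prop :=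
  ∃ (Jg : Finset (Fin p)) (JG JH : Finset (Fin m)) (lg : Fin p → ℝ) (lh : Fin q → ℝ)
    (lG lH : Fin m → ℝ),
    P.IsWorkingSet zs d Jg JG JH ∧ P.IsMMultDir zs d lg lh lG lH ∧
    (∀ i ∉ Jg, lg i = 0) ∧ (∀ i ∉ JG, lG i = 0) ∧ (∀ i ∉ JH, lH i = 0) ∧
    ∀ i ∈ JG ∩ JH, lG i = 0 ∧ lH i = 0

/-- The MPSC constraint-violation residual. -/
def residual (z : Euc n) : ℝ :=
  (∑ i, max (P.g i z) 0) + (∑ j, |P.h j z|) + ∑ i, min |P.G i z| |P.H i z|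

/-- The MPSC local error bound property around `z*`. -/
def ErrorBound (zs : Euc n) : Prop :=
  ∃ V ∈ 𝓝 zs, ∃ α > (0 : ℝ), ∀ z ∈ V, Metric.infDist z P.Feas ≤ α * P.residual z

/-- Equality-constraint gradients (at `z`) of the branch problem `NLP(β₁, β₂)`. -/
def EqGrads (zs : Euc n) (b1 b2 : Set (Fin m)) (z : Euc n) : Set (Euc n) :=
  Set.range (fun j => P.h' j z) ∪ (fun i => P.G' i z) '' (P.IGs zs ∪ b1) ∪
    (fun i => P.H' i z) '' (P.IHs zs ∪ b2)

/-- The index set `I⁻` of the branch problem `NLP(β₁, β₂)` at `z*`. -/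
def Iminus (zs : Euc n) (b1 b2 : Set (Fin m)) : Set (Fin p) :=
  {l | l ∈ P.Ig zs ∧
    ∃ (lh : Fin q → ℝ) (lG lH : Fin m → ℝ) (mu : Fin p → ℝ),
      (∀ i, i ∉ P.IGs zs ∪ b1 → lG i = 0) ∧ (∀ i, i ∉ P.IHs zs ∪ b2 → lH i = 0) ∧
      (∀ i, 0 ≤ mu i) ∧ (∀ i, ¬(i ∈ P.Ig zs ∧ i ≠ l) → mu i = 0) ∧
      -(P.g' l zs) = (∑ j, lh j • P.h' j zs)
        + (∑ i, (lG i • P.G' i zs + lH i • P.H' i zs)) + (∑ i, mu i • P.g' i zs)}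

/-- CRSC holds at `z*` for the branch problem `NLP(β₁, β₂)`. -/
def CRSCpiece (zs : Euc n) (b1 b2 : Set (Fin m)) : Prop :=
  ∃ U ∈ 𝓝 zs, ∀ z ∈ U,
    Set.finrank ℝ ((fun i => P.g' i z) '' P.Iminus zs b1 b2 ∪ P.EqGrads zs b1 b2 z) =
      Set.finrank ℝ ((fun i => P.g' i zs) '' P.Iminus zs b1 b2 ∪ P.EqGrads zs b1 b2 zs)

/-- MPSC piecewise CRSC: CRSC holds for every branch problem `NLP(β₁, β₂)`. -/
def PiecewiseCRSC (zs : Euc n) : Prop :=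
  ∀ b1 b2 : Set (Fin m), b1 ∪ b2 = P.IGH zs → b1 ∩ b2 = ∅ → P.CRSCpiece zs b1 b2

/-- The set-valued map `K` (index sets frozen at `z*`, gradients at `z`). -/
def Kmap (zs z : Euc n) : Set (Euc n) :=
  {y | ∃ (lg : Fin p → ℝ) (lh : Fin q → ℝ) (lG lH : Fin m → ℝ),
      (∀ i, 0 ≤ lg i) ∧ (∀ i, i ∉ P.Ig zs → lg i = 0) ∧
      (∀ i ∈ P.IGs zs, lH i = 0) ∧ (∀ i ∈ P.IHs zs, lG i = 0) ∧
      (∀ i ∈ P.IGH zs, lG i * lH i = 0) ∧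
      y = (∑ i, lg i • P.g' i z) + (∑ j, lh j • P.h' j z)
          + (∑ i, (lG i • P.G' i z + lH i • P.H' i z))}

/-- `z*` is AM-regular. -/
def AMRegular (zs : Euc n) : Prop :=
  ∀ y : Euc n,
    (∃ zk yk : ℕ → Euc n, Tendsto zk atTop (𝓝 zs) ∧ Tendsto yk atTop (𝓝 y) ∧
      ∀ k, yk k ∈ P.Kmap zs (zk k)) → y ∈ P.Kmap zs zs

/-- The regular (Fréchet) normal cone to `A` at `x`. -/
def frechetNormalCone (A : Set (Euc n)) (x : Euc n) : Set (Euc n) :=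
  {ζ | ∀ ε > (0 : ℝ), ∃ δ > (0 : ℝ), ∀ y ∈ A, ‖y - x‖ < δ → ⟪ζ, y - x⟫_ℝ ≤ ε * ‖y - x‖}

/-- The generalized Guignard constraint qualification at `z*`. -/
def GGCQ (zs : Euc n) : Prop :=
  frechetNormalCone P.Feas zs = {ζ | ∀ d ∈ P.LinCone zs, ⟪ζ, d⟫_ℝ ≤ 0}

/-- Membership in the multiplier set `R_SC`. -/
def InRSC (zs : Euc n) (lg : Fin p → ℝ) (lh : Fin q → ℝ) (lG lH : Fin m → ℝ) : Prop :=
  (∀ i, i ∉ P.Ig zs → lg i = 0) ∧ (∀ i ∈ P.IHs zs, lG i = 0) ∧ ∀ i ∈ P.IGs zs, lH i = 0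

/-- Membership in the multiplier set `N_SC`. -/
def InNSC (zs : Euc n) (mg : Fin p → ℝ) (mh : Fin q → ℝ) (mG mH : Fin m → ℝ) : Prop :=
  P.InRSC zs mg mh mG mH ∧
  (0 : Euc n) = (∑ i, mg i • P.g' i zs) + (∑ j, mh j • P.h' j zs)
      + (∑ i, (mG i • P.G' i zs + mH i • P.H' i zs))

/-- `z*` is Q-stationary with respect to the bipartition `(β₁, β₂)` of `I_GH*`. -/
def QStat (zs : Euc n) (b1 b2 : Set (Fin m)) : Prop :=
  ∃ (lg mg : Fin p → ℝ) (lh mh : Fin q → ℝ) (lG lH mG mH : Fin m → ℝ),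
    P.InRSC zs lg lh lG lH ∧
    ((0 : Euc n) = P.f' zs + (∑ i, lg i • P.g' i zs) + (∑ j, lh j • P.h' j zs)
        + (∑ i, (lG i • P.G' i zs + lH i • P.H' i zs))) ∧
    P.InNSC zs mg mh mG mH ∧
    (∀ i ∈ P.Ig zs, max (mg i) 0 ≤ lg i) ∧
    (∀ i ∈ b1, lH i = 0 ∧ lG i = mG i) ∧
    ∀ i ∈ b2, lG i = 0 ∧ lH i = mH i

end MPSC

lemma aux_maxsq (t : ℝ) : HasDerivAt (fun s : ℝ => (max s 0) ^ 2) (2 * max t 0) t := by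
  rcases lt_trichotomy t 0 with h | h | h
  · have h1 : (fun s : ℝ => (max s 0) ^ 2) =ᶠ[𝓝 t] fun _ => 0 := by
      filter_upwards [Iio_mem_nhds h] with s hs
      simp [max_eq_right (le_of_lt (Set.mem_Iio.1 hs))]
    rw [max_eq_right h.le, mul_zero]
    exact (hasDerivAt_const t (0 : ℝ)).congr_of_eventuallyEq h1
  · subst h
    rw [hasDerivAt_iff_isLittleO]
    have : (fun x' : ℝ => (x' - 0) ^ 2) =o[𝓝 0] fun x' : ℝ => x' - 0 := by
      simpa using (Asymptotics.isLittleO_pow_id (𝕜 := ℝ) (n := 2) (by norm_num))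
    refine Asymptotics.IsBigO.trans_isLittleO ?_ this
    refine Asymptotics.IsBigO.of_bound 1 (Eventually.of_forall fun x => ?_)
    simp only [max_self, mul_zero, smul_zero, sub_zero, one_mul, norm_pow, Real.norm_eq_abs]
    norm_num
    rcases le_total x 0 with hx | hx
    · simp [max_eq_right hx, sq_nonneg]
    · rw [max_eq_left hx]
  · have h1 : (fun s : ℝ => (max s 0) ^ 2) =ᶠ[𝓝 t] fun s => s ^ 2 := by
      filter_upwards [Ioi_mem_nhds h] with s hs
      simp [max_eq_left (le_of_lt (Set.mem_Ioi.1 hs))]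
    rw [max_eq_left h.le]
    have := (hasDerivAt_pow 2 t).congr_of_eventuallyEq h1
    simpa using this

lemma aux_gcomp {n : ℕ} {φ : ℝ → ℝ} {c : ℝ} {u : Euc n → ℝ} {u' z : Euc n}
    (hφ : HasDerivAt φ c (u z)) (hu : HasGradientAt u u' z) :
    HasGradientAt (fun x => φ (u x)) (c • u') z := by
  have := hφ.comp_hasFDerivAt z hu.hasFDerivAt
  rw [hasGradientAt_iff_hasFDerivAt, map_smul]
  exact this

lemma aux_gsum {n k : ℕ} {u : Fin k → Euc n → ℝ} {u' : Fin k → Euc n} {z : Euc n}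
    (hu : ∀ i, HasGradientAt (u i) (u' i) z) :
    HasGradientAt (fun x => ∑ i, u i x) (∑ i, u' i) z := by
  rw [hasGradientAt_iff_hasFDerivAt, map_sum]
  exact HasFDerivAt.fun_sum fun i _ => (hu i).hasFDerivAt

lemma aux_gadd {n : ℕ} {u v : Euc n → ℝ} {u' v' : Euc n} {z : Euc n}
    (hu : HasGradientAt u u' z) (hv : HasGradientAt v v' z) :
    HasGradientAt (fun x => u x + v x) (u' + v') z := by
  rw [hasGradientAt_iff_hasFDerivAt, map_add]
  exact hu.hasFDerivAt.add hv.hasFDerivAt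

lemma aux_gnorm {n : ℕ} (a z : Euc n) :
    HasGradientAt (fun x => ‖x - a‖ ^ 2) ((2 : ℝ) • (z - a)) z := by
  rw [hasGradientAt_iff_hasFDerivAt]
  have := ((hasFDerivAt_id z).sub_const a).norm_sq
  refine this.congr_fderiv ?_
  ext w
  simp [inner_smul_left]

lemma aux_gcont {n : ℕ} {u : Euc n → ℝ} {u' : Euc n → Euc n}
    (hu : ∀ z, HasGradientAt u (u' z) z) : Continuous u :=
  continuous_iff_continuousAt.2 fun z => (hu z).hasFDerivAt.continuousAt

lemma aux_penalty {n : ℕ} {f V : Euc n → ℝ} (hf : Continuous f) (hV : Continuous V)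
    (hV0 : ∀ z, 0 ≤ V z) {zs : Euc n} (hVs : V zs = 0) {ε : ℝ} (hε : 0 < ε)
    (hmin : ∀ z ∈ Metric.closedBall zs ε, V z = 0 → f zs ≤ f z) :
    ∃ k : ℕ, ∃ z ∈ Metric.ball zs ε,
      IsLocalMin (fun x => (f x + ‖x - zs‖ ^ 2) + (k : ℝ) * V x) z := by
  have hc : ∀ k : ℕ, Continuous (fun x => (f x + ‖x - zs‖ ^ 2) + (k : ℝ) * V x) := by
    intro k; fun_prop
  have hcov : Metric.sphere zs ε ⊆
      ⋃ k : ℕ, {x | f zs < (f x + ‖x - zs‖ ^ 2) + (k : ℝ) * V x} := by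
    intro x hx
    rw [Set.mem_iUnion]
    have hxn : ‖x - zs‖ = ε := by simpa [dist_eq_norm] using hx
    rcases (hV0 x).eq_or_lt with h | h
    · refine ⟨0, ?_⟩
      have := hmin x (Metric.sphere_subset_closedBall hx) h.symm
      simp only [Set.mem_setOf_eq, hxn, ← h]
      nlinarith [sq_pos_of_pos hε]
    · obtain ⟨k, hk⟩ := exists_nat_gt ((f zs - f x) / V x)
      refine ⟨k, ?_⟩
      rw [div_lt_iff₀ h] at hk
      simp only [Set.mem_setOf_eq]
      nlinarith [sq_nonneg ‖x - zs‖]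
  obtain ⟨k, hk⟩ := (isCompact_sphere zs ε).elim_directed_cover _
    (fun k => isOpen_lt continuous_const (hc k)) hcov (by
      apply Monotone.directed_le
      intro a b hab x hx
      simp only [Set.mem_setOf_eq] at hx ⊢
      have : (a : ℝ) * V x ≤ b * V x :=
        mul_le_mul_of_nonneg_right (by exact_mod_cast hab) (hV0 x)
      linarith)
  obtain ⟨z, hz, hzm⟩ := (isCompact_closedBall zs ε).exists_isMinOn
    ⟨zs, Metric.mem_closedBall_self hε.le⟩ (hc k).continuousOn
  have hzb : z ∈ Metric.ball zs ε := by
    rcases (Metric.mem_closedBall.1 hz).lt_or_eq with h | h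
    · exact h
    · exfalso
      have h1 := hk (Metric.mem_sphere.2 h)
      have h2 := hzm (Metric.mem_closedBall_self hε.le)
      simp only [Set.mem_setOf_eq, sub_self, norm_zero, hVs] at h1 h2
      norm_num at h2
      linarith
  refine ⟨k, z, hzb, ?_⟩
  filter_upwards [Metric.isOpen_ball.mem_nhds hzb] with x hx
  exact hzm (Metric.ball_subset_closedBall hx)

lemma aux_akkt {n p q m : ℕ} (P : MPSC n p q m) (zs : Euc n)
    (hfeas : zs ∈ P.Feas) (hmin : IsLocalMinOn P.f P.Feas zs) :
    ∃ r > (0 : ℝ), ∀ ε, 0 < ε → ε ≤ r → ∃ z ∈ Metric.ball zs ε,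
      -(P.f' z + (2 : ℝ) • (z - zs)) ∈ P.Kmap zs z := by
  obtain ⟨hg, hh, hGH⟩ := hfeas
  have hcg := fun i => aux_gcont (P.grad_g i)
  have hev : ∀ᶠ z in 𝓝 zs, (z ∈ P.Feas → P.f zs ≤ P.f z) ∧
      ∀ i, i ∉ P.Ig zs → P.g i z ≤ 0 := by
    refine (eventually_nhdsWithin_iff.1 hmin).and (eventually_all.2 fun i => ?_)
    by_cases hi : i ∈ P.Ig zs
    · exact Eventually.of_forall fun z h => absurd hi h
    · have : P.g i zs < 0 := lt_of_le_of_ne (hg i) hi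
      filter_upwards [(hcg i).continuousAt.eventually_lt continuousAt_const this] with z hz _
      exact hz.le
  obtain ⟨r, hr, hball⟩ := Metric.nhds_basis_closedBall.eventually_iff.1 hev
  refine ⟨r, hr, fun ε hε hεr => ?_⟩
  let e : Fin m → Euc n → ℝ := fun i => if P.G i zs = 0 then P.G i else P.H i
  let e' : Fin m → Euc n → Euc n := fun i => if P.G i zs = 0 then P.G' i else P.H' i
  have he : ∀ i z, HasGradientAt (e i) (e' i z) z := by
    intro i z
    by_cases h : P.G i zs = 0
    · simpa [e, e', h] using P.grad_G i z
    · simpa [e, e', h] using P.grad_H i z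
  have hes : ∀ i, e i zs = 0 := by
    intro i
    by_cases h : P.G i zs = 0
    · simp [e, h]
    · simpa [e, h] using hGH i
  let V : Euc n → ℝ := fun z => (∑ i, (max (P.g i z) 0) ^ 2) + (∑ j, (P.h j z) ^ 2)
    + ∑ i, (e i z) ^ 2
  let V' : Euc n → Euc n := fun z => (∑ i, (2 * max (P.g i z) 0) • P.g' i z)
    + (∑ j, (2 * P.h j z) • P.h' j z) + ∑ i, (2 * e i z) • e' i z
  have hsq : ∀ t : ℝ, HasDerivAt (fun s : ℝ => s ^ 2) (2 * t) t := fun t => by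
    simpa using hasDerivAt_pow 2 t
  have hVV : ∀ z, HasGradientAt V (V' z) z := fun z =>
    aux_gadd (aux_gadd (aux_gsum fun i => aux_gcomp (aux_maxsq _) (P.grad_g i z))
      (aux_gsum fun i => aux_gcomp (hsq _) (P.grad_h i z)))
      (aux_gsum fun i => aux_gcomp (hsq _) (he i z))
  have hA : ∀ z, 0 ≤ ∑ i, (max (P.g i z) 0) ^ 2 := fun z =>
    Finset.sum_nonneg fun i _ => sq_nonneg _
  have hB : ∀ z, 0 ≤ ∑ j, (P.h j z) ^ 2 := fun z => Finset.sum_nonneg fun i _ => sq_nonneg _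
  have hC : ∀ z, 0 ≤ ∑ i, (e i z) ^ 2 := fun z => Finset.sum_nonneg fun i _ => sq_nonneg _
  obtain ⟨k, z, hz, hloc⟩ := aux_penalty (aux_gcont P.grad_f) (aux_gcont hVV)
    (fun z => add_nonneg (add_nonneg (hA z) (hB z)) (hC z))
    (zs := zs) (by simp [V, hes, hh, max_eq_right (hg _)]) hε (by
      intro z hz hVz
      refine (hball (Metric.closedBall_subset_closedBall hεr hz)).1 ?_
      have a := hA z
      have b := hB z
      have c := hC z
      simp only [V] at hVz
      have a0 : ∑ i, (max (P.g i z) 0) ^ 2 = 0 := by linarith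
      have b0 : ∑ j, (P.h j z) ^ 2 = 0 := by linarith
      have c0 : ∑ i, (e i z) ^ 2 = 0 := by linarith
      rw [Finset.sum_eq_zero_iff_of_nonneg fun i _ => sq_nonneg _] at a0 b0 c0
      refine ⟨fun i => ?_, fun j => ?_, fun i => ?_⟩
      · have := pow_eq_zero_iff (two_ne_zero) |>.1 (a0 i (Finset.mem_univ _))
        exact max_eq_right_iff.1 this
      · exact pow_eq_zero_iff (two_ne_zero) |>.1 (b0 j (Finset.mem_univ _))
      · have := pow_eq_zero_iff (two_ne_zero) |>.1 (c0 i (Finset.mem_univ _))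
        by_cases h : P.G i zs = 0
        · simp only [e, h, if_true] at this
          rw [this, zero_mul]
        · simp only [e, h, if_false] at this
          rw [this, mul_zero])
  refine ⟨z, hz, ?_⟩
  have hD : HasGradientAt (fun x => (P.f x + ‖x - zs‖ ^ 2) + (k : ℝ) * V x)
      ((P.f' z + (2 : ℝ) • (z - zs)) + (k : ℝ) • V' z) z := by
    refine aux_gadd (aux_gadd (P.grad_f z) (aux_gnorm zs z)) ?_
    refine aux_gcomp (φ := fun t => (k : ℝ) * t) ?_ (hVV z)
    simpa using (hasDerivAt_id (V z)).const_mul (k : ℝ)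
  have h0 := hloc.hasFDerivAt_eq_zero hD.hasFDerivAt
  rw [map_eq_zero_iff _ (InnerProductSpace.toDual ℝ (Euc n)).injective] at h0
  rw [neg_eq_of_add_eq_zero_right h0]
  refine ⟨fun i => k * (2 * max (P.g i z) 0), fun j => k * (2 * P.h j z),
    fun i => if P.G i zs = 0 then k * (2 * e i z) else 0,
    fun i => if P.G i zs = 0 then 0 else k * (2 * e i z), ?_, ?_, ?_, ?_, ?_, ?_⟩
  · intro i; positivity
  · intro i hi
    have := (hball (Metric.closedBall_subset_closedBall hεr
      (Metric.ball_subset_closedBall hz))).2 i hi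
    simp [max_eq_right this]
  · intro i hi
    simp [hi.1]
  · intro i hi
    simp [hi.1]
  · intro i hi
    simp [hi.1]
  · simp only [V', smul_add, Finset.smul_sum, smul_smul]
    congr 1
    refine Finset.sum_congr rfl fun i _ => ?_
    by_cases h : P.G i zs = 0 <;> simp [e', h]

/-- a local minimizer of the MPSC which is AM-regular is M-stationary. -/
theorem mpsc_AMregular_M_stationary {n p q m : ℕ} (P : MPSC n p q m) (zs : Euc n)
    (hfeas : zs ∈ P.Feas) (hmin : IsLocalMinOn P.f P.Feas zs)
    (hreg : P.AMRegular zs) :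
    ∃ (lg : Fin p → ℝ) (lh : Fin q → ℝ) (lG lH : Fin m → ℝ),
      P.IsMMult zs lg lh lG lH := by
  obtain ⟨r, hr, H⟩ := aux_akkt P zs hfeas hmin
  have hpos : ∀ k : ℕ, 0 < r / ((k : ℝ) + 1) := fun k => by positivity
  have hle : ∀ k : ℕ, r / ((k : ℝ) + 1) ≤ r := fun k =>
    div_le_self hr.le (by linarith [Nat.cast_nonneg (α := ℝ) k])
  choose z hz hK using fun k : ℕ => H _ (hpos k) (hle k)
  have hzt : Tendsto z atTop (𝓝 zs) := by
    rw [tendsto_iff_dist_tendsto_zero]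
    refine squeeze_zero (fun _ => dist_nonneg) (fun k => (Metric.mem_ball.1 (hz k)).le) ?_
    simpa [div_eq_mul_inv] using
      (tendsto_one_div_add_atTop_nhds_zero_nat (𝕜 := ℝ)).const_mul r
  have hcont : Continuous fun x : Euc n => -(P.f' x + (2 : ℝ) • (x - zs)) := by
    have := P.cont_f'
    fun_prop
  have hyt := (hcont.tendsto zs).comp hzt
  obtain ⟨lg, lh, lG, lH, h1, h2, h3, h4, h5, h6⟩ := hreg _ ⟨z, _, hzt, hyt, hK⟩
  refine ⟨lg, lh, lG, lH, ?_, fun i _ => h1 i, h4, h3, h5⟩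
  have hs : (∑ i ∈ Finset.univ.filter (fun i => i ∈ P.Ig zs), lg i • P.g' i zs)
      = ∑ i, lg i • P.g' i zs := by
    refine Finset.sum_filter_of_ne fun i _ hi => ?_
    by_contra hc
    exact hi (by rw [h2 i hc, zero_smul])
  rw [hs]
  simp only [sub_self, smul_zero, add_zero] at h6
  have : P.f' zs + -P.f' zs = 0 := add_neg_cancel _
  rw [h6] at this
  rw [← this]
  abel
end
end

section
/- Let z* be a local minimizer of the MPSC and let d ∈ C(z*) be a critical direction. If MPSC-LICQ(d) holds at z*, then z* is S-stationary in direction d. -/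
open scoped Classical InnerProductSpace
open Filter Topology

noncomputable section

namespace MPSCaux

lemma exists_dual {n : ℕ} {ι : Type*} {a : ι → Euc n} (ha : LinearIndependent ℝ a)
    (y : ι → ℝ) : ∃ v : Euc n, ∀ i, ⟪a i, v⟫_ℝ = y i := by
  let b := Module.Basis.span ha
  obtain ⟨φ, hφ⟩ := LinearMap.exists_extend (b.constr ℝ y)
  refine ⟨(InnerProductSpace.toDual ℝ (Euc n)).symm (LinearMap.toContinuousLinearMap φ), ?_⟩
  intro i
  rw [real_inner_comm, InnerProductSpace.toDual_symm_apply]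
  have h1 : (b i : Euc n) = a i := congrArg Subtype.val (Module.Basis.span_apply ha i)
  have h2 := LinearMap.congr_fun hφ (b i)
  rw [Module.Basis.constr_basis] at h2
  simpa [h1] using h2

lemma exists_curve {n : ℕ} {ι : Type*} [Fintype ι] (F : ι → Euc n → ℝ)
    (a : ι → Euc n → Euc n) (hF : ∀ i z, HasGradientAt (F i) (a i z) z)
    (hc : ∀ i, Continuous (a i)) (zs u : Euc n)
    (hli : LinearIndependent ℝ (fun i => a i zs)) (hu : ∀ i, ⟪a i zs, u⟫_ℝ = 0) :
    ∃ c : ℝ → Euc n, c 0 = zs ∧ HasDerivAt c u 0 ∧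
      ∀ᶠ t in 𝓝 (0 : ℝ), ∀ i, F i (c t) = F i zs := by
  let A : Euc n →L[ℝ] (ι → ℝ) :=
    ContinuousLinearMap.pi (fun i => InnerProductSpace.toDual ℝ (Euc n) (a i zs))
  have hA : HasStrictFDerivAt (fun z i => F i z) A zs := by
    refine hasStrictFDerivAt_pi.2 fun i => ?_
    refine hasStrictFDerivAt_of_hasFDerivAt_of_continuousAt
      (f' := fun z => InnerProductSpace.toDual ℝ (Euc n) (a i z)) ?_ ?_
    · exact Eventually.of_forall fun z => (hF i z).hasFDerivAt
    · exact ((InnerProductSpace.toDual ℝ (Euc n)).continuous.comp (hc i)).continuousAt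
  have hr : A.range = ⊤ := by
    rw [LinearMap.range_eq_top]
    intro y
    obtain ⟨v, hv⟩ := exists_dual hli y
    refine ⟨v, ?_⟩
    funext i
    simpa [A] using hv i
  have hk : u ∈ A.ker := by
    rw [LinearMap.mem_ker]
    funext i
    simpa [A] using hu i
  let U : A.ker := ⟨u, hk⟩
  let c : ℝ → Euc n := fun t => hA.implicitFunction _ A hr (fun i => F i zs) (t • U)
  have hl : HasDerivAt (fun t : ℝ => t • U) U 0 := by
    simpa using (hasDerivAt_id (0 : ℝ)).smul_const U
  refine ⟨c, ?_, ?_, ?_⟩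
  · simp only [c, zero_smul]
    exact hA.implicitFunction_apply_image hr
  · have h1 := (hA.to_implicitFunction hr).hasFDerivAt
    have h2 : HasFDerivAt (hA.implicitFunction _ A hr (fun i => F i zs)) A.ker.subtypeL
      ((0 : ℝ) • U) := by rw [zero_smul]; exact h1
    exact h2.comp_hasDerivAt (0 : ℝ) hl
  · have h1 := hA.map_implicitFunction_eq hr
    have h2 : Tendsto (fun t : ℝ => ((fun i => F i zs), t • U)) (𝓝 0)
        (𝓝 ((fun i => F i zs), (0 : A.ker))) := by
      refine tendsto_const_nhds.prodMk_nhds ?_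
      have := hl.continuousAt.tendsto
      simpa using this
    filter_upwards [h2.eventually h1] with t ht i
    exact congrFun ht i

lemma eventually_lt {φ : ℝ → ℝ} {e : ℝ} (h : HasDerivAt φ e 0) (he : e < 0) :
    ∀ᶠ t in 𝓝[>] (0 : ℝ), φ t < φ 0 := by
  have h1 := (hasDerivAt_iff_tendsto_slope.1 h).mono_left
    (nhdsWithin_mono (0 : ℝ) (fun t (ht : t ∈ Set.Ioi (0 : ℝ)) => ne_of_gt ht))
  filter_upwards [h1.eventually (gt_mem_nhds he), self_mem_nhdsWithin] with t ht ht0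
  rw [slope_def_field] at ht
  have h0 : (0 : ℝ) < t := ht0
  rw [sub_zero, div_neg_iff] at ht
  rcases ht with h | h <;> linarith [h.1, h.2]

lemma grad_curve {n : ℕ} {F : Euc n → ℝ} {a u zs : Euc n} {c : ℝ → Euc n}
    (hF : HasGradientAt F a zs) (h0 : c 0 = zs) (hc : HasDerivAt c u 0) :
    HasDerivAt (fun t => F (c t)) ⟪a, u⟫_ℝ 0 := by
  have h1 : HasFDerivAt F (InnerProductSpace.toDual ℝ (Euc n) a) (c 0) := by
    rw [h0]; exact hF.hasFDerivAt
  have h2 := h1.comp_hasDerivAt (0 : ℝ) hc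
  rw [InnerProductSpace.toDual_apply_apply] at h2
  exact h2

lemma ev_affine {x y z : ℝ} (hx : x < 0) :
    ∀ᶠ s in 𝓝[>] (0 : ℝ), x + s * y + s * s * z < 0 := by
  have h : Tendsto (fun s : ℝ => x + s * y + s * s * z) (𝓝 0) (𝓝 x) := by
    have : Continuous (fun s : ℝ => x + s * y + s * s * z) := by fun_prop
    simpa using this.tendsto 0
  exact (h.eventually (gt_mem_nhds hx)).filter_mono nhdsWithin_le_nhds

variable {n p q m : ℕ} (P : MPSC n p q m)

lemma branch (zs : Euc n)
    (hfeas : zs ∈ P.Feas) (hmin : IsLocalMinOn P.f P.Feas zs)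
    (d : Euc n) (hd : d ∈ P.Crit zs) (hlicq : P.LICQd zs d) (v : Euc n)
    (hg : ∀ i ∈ P.Igd zs d, ⟪P.g' i zs, v⟫_ℝ ≤ 0)
    (hh : ∀ j, ⟪P.h' j zs, v⟫_ℝ = 0)
    (hG : ∀ i ∈ P.IGs zs ∪ P.IGd zs d, ⟪P.G' i zs, v⟫_ℝ = 0)
    (hH : ∀ i ∈ P.IHs zs ∪ P.IHd zs d, ⟪P.H' i zs, v⟫_ℝ = 0)
    (hGH : ∀ i ∈ P.IGHd zs d, ⟪P.G' i zs, v⟫_ℝ = 0 ∨ ⟪P.H' i zs, v⟫_ℝ = 0) :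
    0 ≤ ⟪P.f' zs, v⟫_ℝ := by
  by_contra hneg
  push Not at hneg
  obtain ⟨⟨dg, dh, dG, dH, dGH⟩, df⟩ := hd
  obtain ⟨fg, fh, fGH⟩ := hfeas
  let a : ({i // i ∈ P.Igd zs d} ⊕ (Fin q ⊕
      ({i // i ∈ P.IGs zs ∪ P.IGd zs d ∪ P.IGHd zs d} ⊕
       {i // i ∈ P.IHs zs ∪ P.IHd zs d ∪ P.IGHd zs d}))) → Euc n → Euc n :=
    Sum.elim (fun i => P.g' i.1) (Sum.elim (fun j => P.h' j)
      (Sum.elim (fun i => P.G' i.1) (fun i => P.H' i.1)))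
  let F : ({i // i ∈ P.Igd zs d} ⊕ (Fin q ⊕
      ({i // i ∈ P.IGs zs ∪ P.IGd zs d ∪ P.IGHd zs d} ⊕
       {i // i ∈ P.IHs zs ∪ P.IHd zs d ∪ P.IGHd zs d}))) → Euc n → ℝ :=
    Sum.elim (fun i => P.g i.1) (Sum.elim (fun j => P.h j)
      (Sum.elim (fun i => P.G i.1) (fun i => P.H i.1)))
  have hli : LinearIndependent ℝ (fun k => a k zs) := by
    have h0 := hlicq
    unfold MPSC.LICQd at h0
    convert h0 using 1
    funext k
    rcases k with k | k | k | k <;> rfl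
  have hFa : ∀ k z, HasGradientAt (F k) (a k z) z := by
    rintro (k | k | k | k) z
    · exact P.grad_g _ z
    · exact P.grad_h _ z
    · exact P.grad_G _ z
    · exact P.grad_H _ z
  have hca : ∀ k, Continuous (a k) := by
    rintro (k | k | k | k)
    · exact P.cont_g' _
    · exact P.cont_h' _
    · exact P.cont_G' _
    · exact P.cont_H' _
  have had : ∀ k, ⟪a k zs, d⟫_ℝ = 0 := by
    rintro (⟨k, hk⟩ | k | ⟨k, hk⟩ | ⟨k, hk⟩)
    · exact hk.2
    · exact dh k
    · rcases hk with (hk | hk) | hk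
      · exact dG k hk
      · exact hk.2.1
      · exact hk.2.1
    · rcases hk with (hk | hk) | hk
      · exact dH k hk
      · exact hk.2.2
      · exact hk.2.2
  obtain ⟨w, hw⟩ := exists_dual hli (Sum.elim (fun _ => -1) (fun _ => 0))
  -- choose the direction
  have ev1 : ∀ᶠ s in 𝓝[>] (0 : ℝ), ∀ i, i ∈ P.Ig zs →
      ⟪P.g' i zs, d + s • v + (s * s) • w⟫_ℝ < 0 := by
    rw [eventually_all]
    intro i
    by_cases hi : i ∈ P.Ig zs
    · by_cases hid : ⟪P.g' i zs, d⟫_ℝ = 0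
      · have hw1 : ⟪P.g' i zs, w⟫_ℝ = -1 := hw (Sum.inl ⟨i, hi, hid⟩)
        have hv1 := hg i ⟨hi, hid⟩
        filter_upwards [self_mem_nhdsWithin] with s hs _
        have hs0 : (0 : ℝ) < s := hs
        simp only [inner_add_right, real_inner_smul_right, hw1, hid]
        nlinarith [mul_nonneg hs0.le (neg_nonneg.2 hv1), mul_pos hs0 hs0]
      · have hlt : ⟪P.g' i zs, d⟫_ℝ < 0 := lt_of_le_of_ne (dg i hi) hid
        filter_upwards [ev_affine (y := ⟪P.g' i zs, v⟫_ℝ) (z := ⟪P.g' i zs, w⟫_ℝ) hlt] with s hs _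
        simpa only [inner_add_right, real_inner_smul_right] using hs
    · exact Eventually.of_forall fun s h => absurd h hi
  have ev2 : ∀ᶠ s in 𝓝[>] (0 : ℝ), ⟪P.f' zs, d + s • v + (s * s) • w⟫_ℝ < 0 := by
    filter_upwards [ev_affine (y := ⟪P.f' zs, w⟫_ℝ) (z := 0) hneg, self_mem_nhdsWithin] with s hs h0
    have hs0 : (0 : ℝ) < s := h0
    simp only [inner_add_right, real_inner_smul_right]
    nlinarith [mul_pos hs0 (neg_pos.2 hs)]
  obtain ⟨s, hs1, hs2⟩ := (ev1.and ev2).exists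
  set u := d + s • v + (s * s) • w with hu_def
  let S := {k // (∃ k', k = Sum.inr k') ∧ ⟪a k zs, v⟫_ℝ = 0}
  haveI : Fintype S := Fintype.ofFinite _
  have huS : ∀ k : S, ⟪a k.1 zs, u⟫_ℝ = 0 := by
    rintro ⟨k, ⟨k', rfl⟩, hk⟩
    have h1 := hw (Sum.inr k')
    simp only [Sum.elim_inr] at h1
    simp only [hu_def, inner_add_right, real_inner_smul_right, hk, h1, had]
    simp
  obtain ⟨c, hc0, hcd, hcF⟩ := exists_curve (fun k : S => F k.1) (fun k : S => a k.1)
    (fun k z => hFa k.1 z) (fun k => hca k.1) zs u (hli.comp _ Subtype.val_injective) huS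
  have hct : Tendsto c (𝓝[>] 0) (𝓝 zs) := by
    have := hcd.continuousAt.tendsto
    rw [hc0] at this
    exact this.mono_left nhdsWithin_le_nhds
  have evg : ∀ᶠ t in 𝓝[>] (0 : ℝ), ∀ i, P.g i (c t) ≤ 0 := by
    rw [eventually_all]
    intro i
    by_cases hi : P.g i zs = 0
    · filter_upwards [eventually_lt (grad_curve (P.grad_g i zs) hc0 hcd) (hs1 i hi)] with t ht
      rw [hc0, hi] at ht
      exact ht.le
    · have hlt : P.g i zs < 0 := lt_of_le_of_ne (fg i) hi
      have hcont : Tendsto (fun t => P.g i (c t)) (𝓝[>] 0) (𝓝 (P.g i zs)) :=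
        (P.grad_g i zs).hasFDerivAt.continuousAt.tendsto.comp hct
      filter_upwards [hcont.eventually (gt_mem_nhds hlt)] with t ht
      exact le_of_lt ht
  have evf := eventually_lt (grad_curve (P.grad_f zs) hc0 hcd) hs2
  have evF := hcF.filter_mono (nhdsWithin_le_nhds (s := Set.Ioi (0 : ℝ)))
  have evfeas : ∀ᶠ t in 𝓝[>] (0 : ℝ), c t ∈ P.Feas := by
    filter_upwards [evg, evF] with t htg htF
    refine ⟨htg, fun j => ?_, fun i => ?_⟩
    · have := htF ⟨Sum.inr (Sum.inl j), ⟨_, rfl⟩, hh j⟩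
      exact this.trans (fh j)
    · have useG : ∀ hi : i ∈ P.IGs zs ∪ P.IGd zs d ∪ P.IGHd zs d, ⟪P.G' i zs, v⟫_ℝ = 0 →
          P.G i zs = 0 → P.G i (c t) * P.H i (c t) = 0 := by
        intro hi h1 h2
        have := htF ⟨Sum.inr (Sum.inr (Sum.inl ⟨i, hi⟩)), ⟨_, rfl⟩, h1⟩
        have h3 : P.G i (c t) = 0 := this.trans h2
        rw [h3, zero_mul]
      have useH : ∀ hi : i ∈ P.IHs zs ∪ P.IHd zs d ∪ P.IGHd zs d, ⟪P.H' i zs, v⟫_ℝ = 0 →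
          P.H i zs = 0 → P.G i (c t) * P.H i (c t) = 0 := by
        intro hi h1 h2
        have := htF ⟨Sum.inr (Sum.inr (Sum.inr ⟨i, hi⟩)), ⟨_, rfl⟩, h1⟩
        have h3 : P.H i (c t) = 0 := this.trans h2
        rw [h3, mul_zero]
      by_cases h1 : P.G i zs = 0
      · by_cases h2 : P.H i zs = 0
        · have hm : i ∈ P.IGH zs := ⟨h1, h2⟩
          by_cases h3 : ⟪P.G' i zs, d⟫_ℝ = 0
          · by_cases h4 : ⟪P.H' i zs, d⟫_ℝ = 0
            · have hm2 : i ∈ P.IGHd zs d := ⟨hm, h3, h4⟩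
              rcases hGH i hm2 with h5 | h5
              · exact useG (Or.inr hm2) h5 h1
              · exact useH (Or.inr hm2) h5 h2
            · have hm2 : i ∈ P.IGd zs d := ⟨hm, h3, h4⟩
              exact useG (Or.inl (Or.inr hm2)) (hG i (Or.inr hm2)) h1
          · have h4 : ⟪P.H' i zs, d⟫_ℝ = 0 := (mul_eq_zero.1 (dGH i hm)).resolve_left h3
            have hm2 : i ∈ P.IHd zs d := ⟨hm, h3, h4⟩
            exact useH (Or.inl (Or.inr hm2)) (hH i (Or.inr hm2)) h2
        · have hm2 : i ∈ P.IGs zs := ⟨h1, h2⟩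
          exact useG (Or.inl (Or.inl hm2)) (hG i (Or.inl hm2)) h1
      · have h2 : P.H i zs = 0 := (mul_eq_zero.1 (fGH i)).resolve_left h1
        have hm2 : i ∈ P.IHs zs := ⟨h1, h2⟩
        exact useH (Or.inl (Or.inl hm2)) (hH i (Or.inl hm2)) h2
  have hct2 : Tendsto c (𝓝[>] 0) (𝓝[P.Feas] zs) :=
    tendsto_nhdsWithin_iff.2 ⟨hct, evfeas⟩
  have evmin := hct2.eventually hmin
  obtain ⟨t, ht1, ht2⟩ := (evmin.and evf).exists
  rw [hc0] at ht2
  exact absurd ht2 (not_lt.2 ht1)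

lemma sum_ext {N : ℕ} {n : ℕ} (p : Fin N → Prop) [DecidablePred p]
    [Fintype {i // p i}] (φ : {i // p i} → ℝ) (X : Fin N → Euc n) :
    ∑ i, (if h : p i then φ ⟨i, h⟩ else 0) • X i = ∑ i : {i // p i}, φ i • X i.1 := by
  have h1 : ∑ i : {i // p i}, φ i • X i.1 =
      ∑ i : {i // p i}, (fun i => (if h : p i then φ ⟨i, h⟩ else 0) • X i) i.1 := by
    refine Finset.sum_congr rfl fun i _ => ?_
    simp [i.2]
  rw [h1, ← Finset.sum_subtype (Finset.univ.filter p) (by simp)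
    (fun i => (if h : p i then φ ⟨i, h⟩ else 0) • X i), Finset.sum_filter]
  refine Finset.sum_congr rfl fun i _ => ?_
  by_cases h : p i <;> simp [h]

end MPSCaux

/-- a local minimizer satisfying MPSC-LICQ(d) for a critical direction `d`
is S-stationary in direction `d`. -/
theorem mpsc_LICQd_S_stationary_dir {n p q m : ℕ} (P : MPSC n p q m) (zs : Euc n)
    (hfeas : zs ∈ P.Feas) (hmin : IsLocalMinOn P.f P.Feas zs)
    (d : Euc n) (hd : d ∈ P.Crit zs) (hlicq : P.LICQd zs d) :
    P.SStatDir zs d := by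
  have key := MPSCaux.branch P zs hfeas hmin d hd hlicq
  have hli := hlicq
  unfold MPSC.LICQd at hli
  set a := Sum.elim (fun i : {i // i ∈ P.Igd zs d} => P.g' i.1 zs)
      (Sum.elim (fun j : Fin q => P.h' j zs)
        (Sum.elim (fun i : {i // i ∈ P.IGs zs ∪ P.IGd zs d ∪ P.IGHd zs d} => P.G' i.1 zs)
          (fun i : {i // i ∈ P.IHs zs ∪ P.IHd zs d ∪ P.IGHd zs d} => P.H' i.1 zs))) with ha
  -- disjointness of the index sets
  have disG : ∀ i, i ∈ P.IHs zs ∪ P.IHd zs d →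
      i ∉ P.IGs zs ∪ P.IGd zs d ∪ P.IGHd zs d := by
    rintro i (hi | hi) ((hj | hj) | hj)
    · exact hi.1 hj.1
    · exact hi.1 hj.1.1
    · exact hi.1 hj.1.1
    · exact hj.2 hi.1.2
    · exact hi.2.1 hj.2.1
    · exact hi.2.1 hj.2.1
  have disH : ∀ i, i ∈ P.IGs zs ∪ P.IGd zs d →
      i ∉ P.IHs zs ∪ P.IHd zs d ∪ P.IGHd zs d := by
    rintro i (hi | hi) ((hj | hj) | hj)
    · exact hi.2 hj.2
    · exact hi.2 hj.1.2
    · exact hi.2 hj.1.2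
    · exact hj.1 hi.1.1
    · exact hi.2.2 hj.2.2
    · exact hi.2.2 hj.2.2
  have eqG : ∀ v : Euc n, ∀ k : {i // i ∈ P.IGs zs ∪ P.IGd zs d ∪ P.IGHd zs d},
      ⟪a (Sum.inr (Sum.inr (Sum.inl k))), v⟫_ℝ = ⟪P.G' k.1 zs, v⟫_ℝ := fun _ _ => rfl
  have eqH : ∀ v : Euc n, ∀ k : {i // i ∈ P.IHs zs ∪ P.IHd zs d ∪ P.IGHd zs d},
      ⟪a (Sum.inr (Sum.inr (Sum.inr k))), v⟫_ℝ = ⟪P.H' k.1 zs, v⟫_ℝ := fun _ _ => rfl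
  -- the gradient lies in the span
  have hortho : ∀ v, (∀ k, ⟪a k, v⟫_ℝ = 0) → 0 ≤ ⟪P.f' zs, v⟫_ℝ := by
    intro v hv
    refine key v (fun i hi => (hv (Sum.inl ⟨i, hi⟩)).le) (fun j => hv (Sum.inr (Sum.inl j)))
      (fun i hi => hv (Sum.inr (Sum.inr (Sum.inl ⟨i, Or.inl hi⟩))))
      (fun i hi => hv (Sum.inr (Sum.inr (Sum.inr ⟨i, Or.inl hi⟩))))
      (fun i hi => Or.inl (hv (Sum.inr (Sum.inr (Sum.inl ⟨i, Or.inr hi⟩)))))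
  have hspan : P.f' zs ∈ Submodule.span ℝ (Set.range a) := by
    rw [← Submodule.orthogonal_orthogonal (Submodule.span ℝ (Set.range a)),
      Submodule.mem_orthogonal']
    intro v hv
    have hv' : ∀ k, ⟪a k, v⟫_ℝ = 0 := fun k =>
      (Submodule.mem_orthogonal _ _).1 hv _ (Submodule.subset_span ⟨k, rfl⟩)
    have h1 := hortho v hv'
    have h2 := hortho (-v) (fun k => by rw [inner_neg_right, hv' k, neg_zero])
    rw [inner_neg_right] at h2
    linarith
  obtain ⟨c, hc⟩ := (Submodule.mem_span_range_iff_exists_fun ℝ).1 hspan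
  have hcv : ∀ v : Euc n, ⟪P.f' zs, v⟫_ℝ = ∑ k, c k * ⟪a k, v⟫_ℝ := by
    intro v
    rw [← hc, sum_inner]
    simp only [real_inner_smul_left]
  have hdual : ∀ (k) (r : ℝ), ∃ v : Euc n, (∀ l, ⟪a l, v⟫_ℝ = if l = k then r else 0) ∧
      ⟪P.f' zs, v⟫_ℝ = c k * r := by
    intro k r
    obtain ⟨v, hv⟩ := MPSCaux.exists_dual hli (fun l => if l = k then r else 0)
    refine ⟨v, hv, ?_⟩
    rw [hcv v]
    simp [hv]
  have sgn_g : ∀ k, c (Sum.inl k) ≤ 0 := by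
    intro k
    obtain ⟨v, hv, hf⟩ := hdual (Sum.inl k) (-1)
    have h0 : 0 ≤ ⟪P.f' zs, v⟫_ℝ := by
      refine key v (fun i hi => ?_) (fun j => ?_) (fun i hi => ?_) (fun i hi => ?_)
        (fun i hi => Or.inl ?_)
      · refine (hv (Sum.inl ⟨i, hi⟩)).trans_le ?_
        split_ifs <;> norm_num
      · exact (hv (Sum.inr (Sum.inl j))).trans (if_neg (by simp))
      · exact (hv (Sum.inr (Sum.inr (Sum.inl ⟨i, Or.inl hi⟩)))).trans (if_neg (by simp))
      · exact (hv (Sum.inr (Sum.inr (Sum.inr ⟨i, Or.inl hi⟩)))).trans (if_neg (by simp))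
      · exact (hv (Sum.inr (Sum.inr (Sum.inl ⟨i, Or.inr hi⟩)))).trans (if_neg (by simp))
    rw [hf] at h0
    linarith
  have zero_G : ∀ i, ∀ hi : i ∈ P.IGHd zs d,
      c (Sum.inr (Sum.inr (Sum.inl ⟨i, Or.inr hi⟩))) = 0 := by
    intro i0 hi0
    have main : ∀ r : ℝ, 0 ≤ c (Sum.inr (Sum.inr (Sum.inl ⟨i0, Or.inr hi0⟩))) * r := by
      intro r
      obtain ⟨v, hv, hf⟩ := hdual (Sum.inr (Sum.inr (Sum.inl ⟨i0, Or.inr hi0⟩))) r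
      rw [← hf]
      refine key v (fun i hi => ?_) (fun j => ?_) (fun i hi => ?_) (fun i hi => ?_)
        (fun i hi => Or.inr ?_)
      · exact ((hv (Sum.inl ⟨i, hi⟩)).trans (if_neg (by simp))).le
      · exact (hv (Sum.inr (Sum.inl j))).trans (if_neg (by simp))
      · refine (hv (Sum.inr (Sum.inr (Sum.inl ⟨i, Or.inl hi⟩)))).trans (if_neg ?_)
        intro h
        have h := congrArg Subtype.val (Sum.inl.inj (Sum.inr.inj (Sum.inr.inj h)))
        dsimp only at h
        subst h
        exact disH i hi (Or.inr hi0)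
      · exact (hv (Sum.inr (Sum.inr (Sum.inr ⟨i, Or.inl hi⟩)))).trans (if_neg (by simp))
      · exact (hv (Sum.inr (Sum.inr (Sum.inr ⟨i, Or.inr hi⟩)))).trans (if_neg (by simp))
    have h1 := main 1
    have h2 := main (-1)
    linarith
  have zero_H : ∀ i, ∀ hi : i ∈ P.IGHd zs d,
      c (Sum.inr (Sum.inr (Sum.inr ⟨i, Or.inr hi⟩))) = 0 := by
    intro i0 hi0
    have main : ∀ r : ℝ, 0 ≤ c (Sum.inr (Sum.inr (Sum.inr ⟨i0, Or.inr hi0⟩))) * r := by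
      intro r
      obtain ⟨v, hv, hf⟩ := hdual (Sum.inr (Sum.inr (Sum.inr ⟨i0, Or.inr hi0⟩))) r
      rw [← hf]
      refine key v (fun i hi => ?_) (fun j => ?_) (fun i hi => ?_) (fun i hi => ?_)
        (fun i hi => Or.inl ?_)
      · exact ((hv (Sum.inl ⟨i, hi⟩)).trans (if_neg (by simp))).le
      · exact (hv (Sum.inr (Sum.inl j))).trans (if_neg (by simp))
      · exact (hv (Sum.inr (Sum.inr (Sum.inl ⟨i, Or.inl hi⟩)))).trans (if_neg (by simp))
      · refine (hv (Sum.inr (Sum.inr (Sum.inr ⟨i, Or.inl hi⟩)))).trans (if_neg ?_)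
        intro h
        have h := congrArg Subtype.val (Sum.inr.inj (Sum.inr.inj (Sum.inr.inj h)))
        dsimp only at h
        subst h
        exact disG i hi (Or.inr hi0)
      · exact (hv (Sum.inr (Sum.inr (Sum.inl ⟨i, Or.inr hi⟩)))).trans (if_neg (by simp))
    have h1 := main 1
    have h2 := main (-1)
    linarith
  have fin : ∀ i ∈ P.IGHd zs d,
      (if h : i ∈ P.IGs zs ∪ P.IGd zs d ∪ P.IGHd zs d then
        -c (Sum.inr (Sum.inr (Sum.inl ⟨i, h⟩))) else 0) = 0 ∧
      (if h : i ∈ P.IHs zs ∪ P.IHd zs d ∪ P.IGHd zs d then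
        -c (Sum.inr (Sum.inr (Sum.inr ⟨i, h⟩))) else 0) = 0 := by
    intro i hi
    have m1 : i ∈ P.IGs zs ∪ P.IGd zs d ∪ P.IGHd zs d := Or.inr hi
    have m2 : i ∈ P.IHs zs ∪ P.IHd zs d ∪ P.IGHd zs d := Or.inr hi
    rw [dif_pos m1, dif_pos m2, zero_G i hi, zero_H i hi]
    simp
  refine ⟨fun i => if h : i ∈ P.Igd zs d then -c (Sum.inl ⟨i, h⟩) else 0,
    fun j => -c (Sum.inr (Sum.inl j)),
    fun i => if h : i ∈ P.IGs zs ∪ P.IGd zs d ∪ P.IGHd zs d then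
      -c (Sum.inr (Sum.inr (Sum.inl ⟨i, h⟩))) else 0,
    fun i => if h : i ∈ P.IHs zs ∪ P.IHd zs d ∪ P.IGHd zs d then
      -c (Sum.inr (Sum.inr (Sum.inr ⟨i, h⟩))) else 0, ⟨?_, ?_, ?_, ?_, ?_, ?_⟩, fin⟩
  · rw [Finset.sum_filter_of_ne, Finset.sum_add_distrib]
    · beta_reduce
      rw [MPSCaux.sum_ext (fun i => i ∈ P.Igd zs d) (fun k => -c (Sum.inl k)),
      MPSCaux.sum_ext (fun i => i ∈ P.IGs zs ∪ P.IGd zs d ∪ P.IGHd zs d)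
        (fun k => -c (Sum.inr (Sum.inr (Sum.inl k)))),
      MPSCaux.sum_ext (fun i => i ∈ P.IHs zs ∪ P.IHd zs d ∪ P.IGHd zs d)
        (fun k => -c (Sum.inr (Sum.inr (Sum.inr k)))), ← hc]
      simp only [Fintype.sum_sum_type, ha, Sum.elim_inl, Sum.elim_inr, neg_smul,
        Finset.sum_neg_distrib]
      abel
    · intro i _ h
      by_contra h'
      exact h (by beta_reduce; rw [dif_neg h', zero_smul])
  · intro i hi
    simp only [dif_pos hi]
    linarith [sgn_g ⟨i, hi⟩]
  · intro i hi
    simp only [dif_neg hi]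
  · intro i hi
    simp only [dif_neg (disG i hi)]
  · intro i hi
    simp only [dif_neg (disH i hi)]
  · intro i hi
    have := (fin i hi).1
    simp only [this, zero_mul]
end
end

section
/- Let z* be a local minimizer of the MPSC and let d ∈ C(z*) be a critical direction. If MPSC quasi-normality holds at z* in direction d, then z* is M-stationary in direction d. -/
open scoped Classical InnerProductSpace
open Filter Topology

noncomputable section

namespace QNAux

/-- Violation function: positive part for inequalities, identity for equalities. -/
def viol (I : Prop) (x : ℝ) : ℝ := if I then max x 0 else x

theorem viol_cont (I : Prop) : Continuous (viol I) := by
  unfold viol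
  split_ifs <;> fun_prop

theorem viol_sq_deriv (I : Prop) (x : ℝ) :
    HasDerivAt (fun y => (viol I y) ^ 2) (2 * viol I x) x := by
  unfold viol
  split_ifs with h
  · rcases lt_trichotomy x 0 with hx | hx | hx
    · have : (fun y : ℝ => (max y 0) ^ 2) =ᶠ[𝓝 x] fun _ => (0 : ℝ) := by
        filter_upwards [gt_mem_nhds hx] with y hy
        simp [max_eq_right (le_of_lt hy)]
      rw [max_eq_right hx.le]
      simpa using (hasDerivAt_const x (0 : ℝ)).congr_of_eventuallyEq this
    · subst hx
      simp only [max_self, mul_zero]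
      rw [hasDerivAt_iff_isLittleO]
      simp only [max_self, sub_zero, smul_zero, ne_eq, OfNat.ofNat_ne_zero, not_false_eq_true,
        zero_pow]
      have h1 : (fun y : ℝ => (max y 0) ^ 2) =O[𝓝 0] fun y : ℝ => y ^ 2 := by
        apply Asymptotics.IsBigO.of_bound 1
        filter_upwards with y
        rw [one_mul, Real.norm_eq_abs, Real.norm_eq_abs, abs_of_nonneg (sq_nonneg _),
          abs_of_nonneg (sq_nonneg _)]
        rcases le_total y 0 with hy | hy
        · rw [max_eq_right hy]; nlinarith [sq_nonneg y]
        · rw [max_eq_left hy]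
      refine h1.trans_isLittleO ?_
      have := Asymptotics.isLittleO_pow_id (𝕜 := ℝ) (n := 2) (by norm_num)
      simpa using this
    · have : (fun y : ℝ => (max y 0) ^ 2) =ᶠ[𝓝 x] fun y => y ^ 2 := by
        filter_upwards [lt_mem_nhds hx] with y hy
        simp [max_eq_left (le_of_lt hy)]
      rw [max_eq_left hx.le]
      simpa using (hasDerivAt_pow 2 x).congr_of_eventuallyEq this
  · simpa using hasDerivAt_pow 2 x

theorem viol_nonneg {I : Prop} (h : I) (x : ℝ) : 0 ≤ viol I x := by simp [viol, h]

theorem viol_mul_pos {I : Prop} {x l : ℝ} (h : 0 < l * viol I x) : 0 < l * x := by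
  unfold viol at h
  split_ifs at h
  · rcases le_total x 0 with hx | hx
    · simp [max_eq_right hx] at h
    · simpa [max_eq_left hx] using h
  · exact h

theorem curve_deriv {n : ℕ} {F : Euc n → ℝ} {g z u w : Euc n} {t : ℝ}
    (h : HasGradientAt F g (z + t • u)) :
    HasDerivAt (fun s : ℝ => F (z + t • (u + s • w))) (t * ⟪g, w⟫_ℝ) 0 := by
  have h1 := h.hasFDerivAt
  have h2 : HasDerivAt (fun s : ℝ => z + t • (u + s • w)) (t • w) 0 := by
    have := ((((hasDerivAt_id (0:ℝ)).smul_const w).const_add u).const_smul t).const_add z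
    simpa using this
  have h3 : z + t • u = (fun s : ℝ => z + t • (u + s • w)) 0 := by simp
  rw [h3] at h1
  have := h1.comp_hasDerivAt (0:ℝ) h2
  simpa [inner_smul_right, Function.comp_def] using this

theorem diff_quot {n : ℕ} {F : Euc n → ℝ} {g z d : Euc n} (h : HasGradientAt F g z)
    {dk : ℕ → Euc n} {t : ℕ → ℝ} (hdk : Tendsto dk atTop (𝓝 d)) (ht : ∀ k, 0 < t k)
    (ht0 : Tendsto t atTop (𝓝 0)) :
    Tendsto (fun k => (F (z + t k • dk k) - F z) / t k) atTop (𝓝 ⟪g, d⟫_ℝ) := by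
  have h1 := (h.hasFDerivAt.hasFDerivWithinAt (s := Set.univ))
  have := h1.lim (l := atTop) (c := fun k => (t k)⁻¹) (d := fun k => t k • dk k) (v := d)
    ?_ (by simp) ?_
  · simpa [div_eq_inv_mul] using this
  · simpa using ht0.smul hdk
  · refine hdk.congr fun k => ?_
    rw [smul_smul, inv_mul_cancel₀ (ht k).ne', one_smul]

theorem sign_limit {n : ℕ} {F : Euc n → ℝ} {g z d : Euc n} (h : HasGradientAt F g z)
    {dk : ℕ → Euc n} {t : ℕ → ℝ} (hdk : Tendsto dk atTop (𝓝 d)) (ht : ∀ k, 0 < t k)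
    (ht0 : Tendsto t atTop (𝓝 0)) (hF : F z ≤ 0) (hd : F z = 0 → ⟪g, d⟫_ℝ ≤ 0)
    (hpos : ∃ᶠ k in atTop, 0 < F (z + t k • dk k)) : F z = 0 ∧ ⟪g, d⟫_ℝ = 0 := by
  have hz : Tendsto (fun k => z + t k • dk k) atTop (𝓝 z) := by
    simpa using (ht0.smul hdk).const_add z
  have h0 : F z = 0 := by
    by_contra hne
    have hlt : F z < 0 := lt_of_le_of_ne hF hne
    have := (h.hasFDerivAt.continuousAt.tendsto.comp hz).eventually (gt_mem_nhds hlt)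
    obtain ⟨k, hk, hk'⟩ := (hpos.and_eventually this).exists
    simp only [Function.comp] at hk'
    linarith
  refine ⟨h0, le_antisymm (hd h0) ?_⟩
  by_contra hne
  push Not at hne
  have := (diff_quot h hdk ht ht0).eventually (gt_mem_nhds hne)
  obtain ⟨k, hk, hk'⟩ := (hpos.and_eventually this).exists
  rw [h0, sub_zero] at hk'
  have := div_pos hk (ht k)
  linarith

/-- Sum of squared violations. -/
def R2 {n : ℕ} {ι : Type} [Fintype ι] (I : ι → Prop) (F : ι → Euc n → ℝ) (z : Euc n) : ℝ :=
  ∑ i, (viol (I i) (F i z)) ^ 2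

theorem R2_nonneg {n : ℕ} {ι : Type} [Fintype ι] (I : ι → Prop) (F : ι → Euc n → ℝ)
    (z : Euc n) : 0 ≤ R2 I F z := Finset.sum_nonneg fun _ _ => sq_nonneg _

/-- Penalized function. -/
def Phi {n : ℕ} {ι : Type} [Fintype ι] (I : ι → Prop) (F : ι → Euc n → ℝ) (f : Euc n → ℝ)
    (z w : Euc n) (t c e M : ℝ) (u : Euc n) : ℝ :=
  f (z + t • u) + c * √(e + R2 I F (z + t • u)) + t * (M * ‖u - w‖ ^ 2)

theorem stationarity {n : ℕ} {ι : Type} [Fintype ι] {I : ι → Prop} {F : ι → Euc n → ℝ}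
    {F' : ι → Euc n → Euc n} (hF : ∀ i z, HasGradientAt (F i) (F' i z) z)
    {f : Euc n → ℝ} {f' : Euc n → Euc n} (hf : ∀ z, HasGradientAt f (f' z) z)
    {z w u : Euc n} {t c e M : ℝ} (ht : 0 < t) (he : 0 < e + R2 I F (z + t • u))
    (hmin : IsLocalMin (Phi I F f z w t c e M) u) :
    f' (z + t • u) + c • (∑ i, (viol (I i) (F i (z + t • u)) / √(e + R2 I F (z + t • u))) •
      F' i (z + t • u)) + (2 * M) • (u - w) = 0 := by
  refine ext_inner_right ℝ fun v => ?_
  have hc : Tendsto (fun s : ℝ => u + s • v) (𝓝 0) (𝓝 u) := by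
    have : Continuous (fun s : ℝ => u + s • v) := by fun_prop
    simpa using this.tendsto 0
  have hm : IsLocalMin (fun s : ℝ => Phi I F f z w t c e M (u + s • v)) 0 := by
    have := hc.eventually hmin
    simpa [IsLocalMin, IsMinFilter] using this
  have h1 := curve_deriv (w := v) (hf (z + t • u))
  have h2 : HasDerivAt (fun s : ℝ => R2 I F (z + t • (u + s • v)))
      (∑ i, 2 * viol (I i) (F i (z + t • u)) * (t * ⟪F' i (z + t • u), v⟫_ℝ)) 0 := by
    unfold R2
    apply HasDerivAt.fun_sum
    intro i _
    have a := viol_sq_deriv (I i) (F i (z + t • (u + (0:ℝ) • v)))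
    have := a.comp (0:ℝ) (curve_deriv (w := v) (hF i (z + t • u)))
    simpa [Function.comp_def] using this
  have h3 := (h2.const_add e).sqrt (by simpa using he.ne')
  have h4 : HasDerivAt (fun s : ℝ => ‖u + s • v - w‖ ^ 2) (2 * ⟪u - w, v⟫_ℝ) 0 := by
    have a : HasDerivAt (fun s : ℝ => u + s • v - w) v 0 := by
      simpa using (((hasDerivAt_id (0:ℝ)).smul_const v).const_add u).sub_const w
    simpa using a.norm_sq
  have h5 := (h1.add (h3.const_mul c)).add ((h4.const_mul M).const_mul t)
  have h6 := hm.hasDerivAt_eq_zero h5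
  simp only [zero_smul, add_zero] at h6
  set S := √(e + R2 I F (z + t • u)) with hS
  have hSpos : 0 < S := Real.sqrt_pos.2 he
  simp only [inner_add_left, inner_smul_left, sum_inner, inner_zero_left]
  simp only [conj_trivial]
  have h7 : (∑ i, 2 * viol (I i) (F i (z + t • u)) * (t * ⟪F' i (z + t • u), v⟫_ℝ)) / (2 * S)
      = t * ∑ i, viol (I i) (F i (z + t • u)) / S * ⟪F' i (z + t • u), v⟫_ℝ := by
    rw [Finset.sum_div, Finset.mul_sum]
    refine Finset.sum_congr rfl fun i _ => ?_
    field_simp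
  rw [h7] at h6
  have : t * (⟪f' (z + t • u), v⟫_ℝ + c * ∑ i, viol (I i) (F i (z + t • u)) / S *
      ⟪F' i (z + t • u), v⟫_ℝ + 2 * M * ⟪u - w, v⟫_ℝ) = 0 := by linarith
  exact (mul_eq_zero.1 this).resolve_left ht.ne'

theorem Phi_cont {n : ℕ} {ι : Type} [Fintype ι] {I : ι → Prop} {F : ι → Euc n → ℝ}
    {F' : ι → Euc n → Euc n} (hF : ∀ i z, HasGradientAt (F i) (F' i z) z)
    {f : Euc n → ℝ} {f' : Euc n → Euc n} (hf : ∀ z, HasGradientAt f (f' z) z)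
    (z w : Euc n) (t c e M : ℝ) : Continuous (Phi I F f z w t c e M) := by
  have a : Continuous f := continuous_iff_continuousAt.2 fun z => (hf z).hasFDerivAt.continuousAt
  have b : ∀ i, Continuous (F i) := fun i =>
    continuous_iff_continuousAt.2 fun z => (hF i z).hasFDerivAt.continuousAt
  have b' : ∀ i, Continuous (fun z => viol (I i) (F i z)) := fun i => (viol_cont _).comp (b i)
  have c' : Continuous (R2 I F) := by unfold R2; fun_prop
  unfold Phi
  fun_prop

theorem ratio_sq_sum {n : ℕ} {ι : Type} [Fintype ι] (I : ι → Prop) (F : ι → Euc n → ℝ)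
    (z : Euc n) {e : ℝ} (he : 0 ≤ e) (hp : 0 < e + R2 I F z) (i : ι) :
    |viol (I i) (F i z) / √(e + R2 I F z)| ≤ 1 := by
  rw [abs_div, abs_of_nonneg (Real.sqrt_nonneg _), div_le_one (Real.sqrt_pos.2 hp)]
  apply Real.abs_le_sqrt
  have : (viol (I i) (F i z)) ^ 2 ≤ R2 I F z :=
    Finset.single_le_sum (f := fun i => (viol (I i) (F i z)) ^ 2)
      (fun _ _ => sq_nonneg _) (Finset.mem_univ i)
  linarith

/-- Compactness extraction for bounded multipliers. -/
theorem extract {ι : Type} [Fintype ι] (l : ℕ → ι → ℝ) (h : ∀ᶠ k in atTop, ∀ i, |l k i| ≤ 1) :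
    ∃ (a : ι → ℝ) (φ : ℕ → ℕ), StrictMono φ ∧ Tendsto (l ∘ φ) atTop (𝓝 a) := by
  obtain ⟨a, -, φ, hφ, hl⟩ := tendsto_subseq_of_frequently_bounded
    (s := Metric.closedBall (0 : ι → ℝ) 1) Metric.isBounded_closedBall (x := l) (by
      refine Eventually.frequently ?_
      filter_upwards [h] with k hk
      rw [mem_closedBall_zero_iff, pi_norm_le_iff_of_nonneg zero_le_one]
      simpa using hk)
  exact ⟨a, φ, hφ, hl⟩

/-- Exact penalization in a directional neighbourhood. -/
theorem exact_penalty {n : ℕ} {ι : Type} [Fintype ι] {I : ι → Prop} {F : ι → Euc n → ℝ}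
    {F' : ι → Euc n → Euc n} (hF : ∀ i z, HasGradientAt (F i) (F' i z) z)
    (hF' : ∀ i, Continuous (F' i))
    {f : Euc n → ℝ} {f' : Euc n → Euc n} (hf : ∀ z, HasGradientAt f (f' z) z)
    (hf' : Continuous f') {z d : Euc n}
    (hmin : ∀ᶠ y in 𝓝 z, R2 I F y = 0 → f z ≤ f y)
    (hqn : ∀ l : ι → ℝ, ∑ i, l i • F' i z = 0 → (∀ i, I i → 0 ≤ l i) →
      (∃ (dk : ℕ → Euc n) (t : ℕ → ℝ), Tendsto dk atTop (𝓝 d) ∧ (∀ k, 0 < t k) ∧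
        Tendsto t atTop (𝓝 0) ∧ ∀ k i, l i ≠ 0 → 0 < l i * F i (z + t k • dk k)) → l = 0) :
    ∃ c : ℝ, 0 ≤ c ∧ ∃ r > (0:ℝ), ∀ t u, 0 < t → t < r → ‖u - d‖ < r →
      f z ≤ f (z + t • u) + c * √(R2 I F (z + t • u)) := by
  by_contra hcon
  push Not at hcon
  have hex : ∀ k : ℕ, ∃ t u, 0 < t ∧ t < 1 / ((k:ℝ) + 1) ∧ ‖u - d‖ < 1 / ((k:ℝ) + 1) ∧
      f (z + t • u) + ((k:ℝ) + 1) ^ 2 * √(R2 I F (z + t • u)) < f z := by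
    intro k
    obtain ⟨t, u, h1, h2, h3, h4⟩ := hcon (((k:ℝ) + 1) ^ 2) (by positivity)
      (1 / ((k:ℝ) + 1)) (by positivity)
    exact ⟨t, u, h1, h2, h3, h4⟩
  choose t w ht0 ht1 hw hlt using hex
  have hinv : Tendsto (fun k : ℕ => 1 / ((k:ℝ) + 1)) atTop (𝓝 0) :=
    tendsto_one_div_add_atTop_nhds_zero_nat
  have htlim : Tendsto t atTop (𝓝 0) :=
    squeeze_zero (fun k => (ht0 k).le) (fun k => (ht1 k).le) hinv
  have hwd : Tendsto (fun k => ‖w k - d‖) atTop (𝓝 0) :=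
    squeeze_zero (fun k => norm_nonneg _) (fun k => (hw k).le) hinv
  have hmem : ∀ k, w k ∈ Metric.closedBall d 1 := by
    intro k
    rw [mem_closedBall_iff_norm]
    refine (hw k).le.trans ?_
    rw [div_le_one (by positivity)]
    linarith [(Nat.cast_nonneg k : (0:ℝ) ≤ k)]
  have hux : ∀ k : ℕ, ∃ u ∈ Metric.closedBall d 1,
      IsMinOn (Phi I F f z (w k) (t k) (((k:ℝ) + 1) ^ 2) 0 ((k:ℝ) + 1))
        (Metric.closedBall d 1) u := fun k =>
    (isCompact_closedBall d 1).exists_isMinOn ⟨w k, hmem k⟩ (Phi_cont hF hf _ _ _ _ _ _).continuousOn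
  choose u hu humin using hux
  have hPhi : ∀ k, f (z + t k • u k) + ((k:ℝ) + 1) ^ 2 * √(R2 I F (z + t k • u k)) +
      t k * (((k:ℝ) + 1) * ‖u k - w k‖ ^ 2) < f z := by
    intro k
    have h := humin k (hmem k)
    simp only [Set.mem_ofPred_eq, Phi, zero_add, sub_self, norm_zero] at h
    have := hlt k
    norm_num at h
    linarith
  have hunorm : ∀ k, ‖u k‖ ≤ ‖d‖ + 1 := by
    intro k
    have h := hu k
    rw [mem_closedBall_iff_norm] at h
    have := norm_add_le (u k - d) d
    simp only [sub_add_cancel] at this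
    linarith
  have hzlim : Tendsto (fun k => z + t k • u k) atTop (𝓝 z) := by
    have : Tendsto (fun k => t k • u k) atTop (𝓝 0) := by
      rw [tendsto_zero_iff_norm_tendsto_zero]
      refine squeeze_zero (g := fun k => t k * (‖d‖ + 1)) (fun _ => norm_nonneg _) (fun k => ?_)
        (by simpa using htlim.mul_const (‖d‖ + 1))
      rw [norm_smul, Real.norm_of_nonneg (ht0 k).le]
      exact mul_le_mul_of_nonneg_left (hunorm k) (ht0 k).le
    simpa using this.const_add z
  -- Lipschitz bound
  obtain ⟨L, hL⟩ := (hf z).hasFDerivAt.isBigO_sub.bound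
  have hLk := hzlim.eventually hL
  have hb : ∀ᶠ k : ℕ in atTop, ‖u k - w k‖ ^ 2 ≤ (|L| * (‖d‖ + 1)) * (1 / ((k:ℝ) + 1)) := by
    filter_upwards [hLk] with k hk
    have h1 := hPhi k
    have h2 : f z - f (z + t k • u k) ≤ t k * (|L| * (‖d‖ + 1)) := by
      have h3 : ‖z + t k • u k - z‖ ≤ t k * (‖d‖ + 1) := by
        rw [add_sub_cancel_left, norm_smul, Real.norm_of_nonneg (ht0 k).le]
        exact mul_le_mul_of_nonneg_left (hunorm k) (ht0 k).le
      have h4 := neg_le_of_abs_le (show |f (z + t k • u k) - f z| ≤ _ from hk)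
      have h5 : L * ‖z + t k • u k - z‖ ≤ |L| * (t k * (‖d‖ + 1)) :=
        (mul_le_mul_of_nonneg_right (le_abs_self L) (norm_nonneg _)).trans
          (mul_le_mul_of_nonneg_left h3 (abs_nonneg _))
      linarith
    have h6 : 0 ≤ ((k:ℝ) + 1) ^ 2 * √(R2 I F (z + t k • u k)) := by positivity
    have h7 : t k * (((k:ℝ) + 1) * ‖u k - w k‖ ^ 2) ≤ t k * (|L| * (‖d‖ + 1)) := by linarith
    have h8 := le_of_mul_le_mul_left h7 (ht0 k)
    rw [mul_one_div, le_div_iff₀ (by positivity)]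
    linarith
  have huw : Tendsto (fun k => ‖u k - w k‖ ^ 2) atTop (𝓝 0) :=
    squeeze_zero' (Eventually.of_forall fun _ => sq_nonneg _) hb (by simpa using hinv.const_mul _)
  have huw' : Tendsto (fun k => u k - w k) atTop (𝓝 0) := by
    rw [tendsto_zero_iff_norm_tendsto_zero]
    have := huw.sqrt
    simpa using this
  have hulim : Tendsto u atTop (𝓝 d) := by
    have h1 := huw'.add (tendsto_iff_norm_sub_tendsto_zero.2 hwd)
    simpa using h1
  have hpos : ∀ᶠ k in atTop, 0 < R2 I F (z + t k • u k) := by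
    filter_upwards [hzlim.eventually hmin] with k hk
    refine lt_of_le_of_ne (R2_nonneg _ _ _) fun h0 => ?_
    have h1 := hk h0.symm
    have h2 := hPhi k
    have h6 : 0 ≤ ((k:ℝ) + 1) ^ 2 * √(R2 I F (z + t k • u k)) := by positivity
    have h7 : 0 ≤ t k * (((k:ℝ) + 1) * ‖u k - w k‖ ^ 2) :=
      mul_nonneg (ht0 k).le (by positivity)
    linarith
  set l : ℕ → ι → ℝ := fun k i => viol (I i) (F i (z + t k • u k)) / √(R2 I F (z + t k • u k))
    with hl
  have hstat : ∀ᶠ k : ℕ in atTop, (1 / ((k:ℝ) + 1)) ^ 2 • f' (z + t k • u k) +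
      ∑ i, l k i • F' i (z + t k • u k) + (2 * (1 / ((k:ℝ) + 1))) • (u k - w k) = 0 := by
    have hint : ∀ᶠ k in atTop, u k ∈ Metric.ball d 1 :=
      hulim.eventually (Metric.ball_mem_nhds d one_pos)
    filter_upwards [hpos, hint] with k hk hi
    have hm : IsLocalMin (Phi I F f z (w k) (t k) (((k:ℝ) + 1) ^ 2) 0 ((k:ℝ) + 1)) (u k) :=
      (humin k).isLocalMin (Filter.mem_of_superset (Metric.isOpen_ball.mem_nhds hi)
        Metric.ball_subset_closedBall)
    have h := stationarity hF hf (ht0 k) (by simpa using hk) hm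
    simp only [zero_add] at h
    have h2 := congrArg (fun x => (1 / ((k:ℝ) + 1)) ^ 2 • x) h
    simp only [smul_add, smul_smul, smul_zero] at h2
    have e1 : (1 / ((k:ℝ) + 1)) ^ 2 * ((k:ℝ) + 1) ^ 2 = 1 := by field_simp
    have e2 : (1 / ((k:ℝ) + 1)) ^ 2 * (2 * ((k:ℝ) + 1)) = 2 * (1 / ((k:ℝ) + 1)) := by field_simp
    rw [e1, e2, one_smul] at h2
    exact h2
  have hbd : ∀ᶠ k in atTop, ∀ i, |l k i| ≤ 1 := by
    filter_upwards [hpos] with k hk i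
    have := ratio_sq_sum I F (z + t k • u k) le_rfl (by simpa using hk) i
    simpa [hl] using this
  obtain ⟨a, φ, hφ, ha⟩ := extract l hbd
  have hφt := hφ.tendsto_atTop
  have hai : ∀ i, Tendsto (fun k => l (φ k) i) atTop (𝓝 (a i)) := fun i =>
    (tendsto_pi_nhds.1 ha) i
  have hsum : ∑ i, (a i) ^ 2 = 1 := by
    have h1 : Tendsto (fun k => ∑ i, (l (φ k) i) ^ 2) atTop (𝓝 (∑ i, (a i) ^ 2)) :=
      tendsto_finsetSum _ fun i _ => (hai i).pow 2
    refine tendsto_nhds_unique h1 (tendsto_const_nhds.congr' ?_)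
    filter_upwards [hφt.eventually hpos] with k hk
    simp only [hl, div_pow, Real.sq_sqrt hk.le]
    rw [← Finset.sum_div]
    exact (div_self hk.ne').symm
  have hzero : ∑ i, a i • F' i z = 0 := by
    have c1 : Tendsto (fun k => f' (z + t k • u k)) atTop (𝓝 (f' z)) :=
      (hf'.tendsto z).comp hzlim
    have c2 : ∀ i, Tendsto (fun k => F' i (z + t k • u k)) atTop (𝓝 (F' i z)) := fun i =>
      ((hF' i).tendsto z).comp hzlim
    have h1 : Tendsto (fun k : ℕ => (1 / ((φ k:ℝ) + 1)) ^ 2 • f' (z + t (φ k) • u (φ k)) +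
      ∑ i, l (φ k) i • F' i (z + t (φ k) • u (φ k)) +
      (2 * (1 / ((φ k:ℝ) + 1))) • (u (φ k) - w (φ k))) atTop
      (𝓝 ((0:ℝ) ^ 2 • f' z + ∑ i, a i • F' i z + (2 * (0:ℝ)) • (0 : Euc n))) := by
      refine Tendsto.add (Tendsto.add ?_ ?_) ?_
      · exact ((hinv.comp hφt).pow 2).smul (c1.comp hφt)
      · exact tendsto_finsetSum _ fun i _ => (hai i).smul ((c2 i).comp hφt)
      · exact ((hinv.comp hφt).const_mul 2).smul (huw'.comp hφt)
    have h2 := tendsto_nhds_unique h1 (tendsto_const_nhds.congr' (by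
      filter_upwards [hφt.eventually hstat] with k hk
      exact hk.symm))
    simpa using h2
  have hsgn : ∀ i, I i → 0 ≤ a i := fun i hi =>
    ge_of_tendsto' (hai i) fun k => div_nonneg (viol_nonneg hi _) (Real.sqrt_nonneg _)
  have hev : ∀ᶠ k in atTop, ∀ i, a i ≠ 0 → 0 < a i * F i (z + t (φ k) • u (φ k)) := by
    rw [eventually_all]
    intro i
    by_cases h0 : a i = 0
    · simp [h0]
    have h1 : Tendsto (fun k => a i * l (φ k) i) atTop (𝓝 (a i * a i)) := (hai i).const_mul _
    filter_upwards [h1.eventually (lt_mem_nhds (mul_self_pos.2 h0)), hφt.eventually hpos]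
      with k hk hk2 _
    apply viol_mul_pos (I := I i)
    simp only [hl] at hk
    rw [← mul_div_assoc] at hk
    exact (div_pos_iff_of_pos_right (Real.sqrt_pos.2 hk2)).1 hk
  obtain ⟨N, hN⟩ := eventually_atTop.1 hev
  have hsh : Tendsto (fun k => φ (k + N)) atTop atTop := hφt.comp (tendsto_add_atTop_nat N)
  have := hqn a hzero hsgn ⟨fun k => u (φ (k + N)), fun k => t (φ (k + N)), hulim.comp hsh,
    fun k => ht0 _, htlim.comp hsh, fun k => hN (k + N) (by omega)⟩
  rw [this] at hsum
  simp at hsum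

theorem nlp {n : ℕ} {ι : Type} [Fintype ι] {I : ι → Prop} {F : ι → Euc n → ℝ}
    {F' : ι → Euc n → Euc n} (hF : ∀ i z, HasGradientAt (F i) (F' i z) z)
    (hF' : ∀ i, Continuous (F' i))
    {f : Euc n → ℝ} {f' : Euc n → Euc n} (hf : ∀ z, HasGradientAt f (f' z) z)
    (hf' : Continuous f') {z d : Euc n}
    (hmin : ∀ᶠ y in 𝓝 z, R2 I F y = 0 → f z ≤ f y)
    (hqn : ∀ l : ι → ℝ, ∑ i, l i • F' i z = 0 → (∀ i, I i → 0 ≤ l i) →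
      (∃ (dk : ℕ → Euc n) (t : ℕ → ℝ), Tendsto dk atTop (𝓝 d) ∧ (∀ k, 0 < t k) ∧
        Tendsto t atTop (𝓝 0) ∧ ∀ k i, l i ≠ 0 → 0 < l i * F i (z + t k • dk k)) → l = 0)
    (hI : ∀ i, I i → F i z ≤ 0 ∧ (F i z = 0 → ⟪F' i z, d⟫_ℝ ≤ 0))
    (hE : ∀ i, ¬ I i → F i z = 0 ∧ ⟪F' i z, d⟫_ℝ = 0)
    (hfd : ⟪f' z, d⟫_ℝ ≤ 0) :
    ∃ l : ι → ℝ, f' z + ∑ i, l i • F' i z = 0 ∧ (∀ i, I i → 0 ≤ l i) ∧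
      ∀ i, I i → l i ≠ 0 → F i z = 0 ∧ ⟪F' i z, d⟫_ℝ = 0 := by
  obtain ⟨c, hc, r, hr, hpen⟩ := exact_penalty hF hF' hf hf' hmin hqn
  set t : ℕ → ℝ := fun k => 1 / ((k:ℝ) + 1) with ht
  have ht0 : ∀ k, 0 < t k := fun k => by simp only [ht]; positivity
  have htlim : Tendsto t atTop (𝓝 0) := tendsto_one_div_add_atTop_nhds_zero_nat
  have hmem : d ∈ Metric.closedBall d (r / 2) := Metric.mem_closedBall_self (by positivity)
  have hux : ∀ k : ℕ, ∃ u ∈ Metric.closedBall d (r / 2),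
      IsMinOn (Phi I F f z d (t k) c ((t k) ^ 4) 1) (Metric.closedBall d (r / 2)) u := fun k =>
    (isCompact_closedBall d (r / 2)).exists_isMinOn ⟨d, hmem⟩
      (Phi_cont hF hf _ _ _ _ _ _).continuousOn
  choose u hu humin using hux
  have hq : ∀ i, Tendsto (fun k => viol (I i) (F i (z + t k • d)) / t k) atTop (𝓝 0) := by
    intro i
    have hdq := diff_quot (hF i z) (tendsto_const_nhds (x := d)) ht0 htlim
    have hzd : Tendsto (fun k => z + t k • d) atTop (𝓝 z) := by
      simpa using (htlim.smul_const d).const_add z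
    by_cases hi : I i
    · rcases (hI i hi).1.lt_or_eq with hneg | h0
      · have := ((hF i z).hasFDerivAt.continuousAt.tendsto.comp hzd).eventually (gt_mem_nhds hneg)
        refine tendsto_const_nhds.congr' ?_
        filter_upwards [this] with k hk
        simp only [Function.comp] at hk
        simp [viol, hi, max_eq_right hk.le]
      · have h1 := (hI i hi).2 h0
        have h2 := hdq.max (tendsto_const_nhds (x := (0:ℝ)))
        rw [max_eq_right h1] at h2
        refine h2.congr fun k => ?_
        simp only [viol, hi, if_true, h0, sub_zero]
        rw [← max_div_div_right (ht0 k).le, zero_div]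
    · obtain ⟨h0, h1⟩ := hE i hi
      rw [h1] at hdq
      simpa [viol, hi, h0] using hdq
  have hRq : Tendsto (fun k => R2 I F (z + t k • d) / (t k) ^ 2) atTop (𝓝 0) := by
    have : Tendsto (fun k => ∑ i, (viol (I i) (F i (z + t k • d)) / t k) ^ 2) atTop
        (𝓝 (∑ _i : ι, (0:ℝ) ^ 2)) := tendsto_finsetSum _ fun i _ => (hq i).pow 2
    simp only [ne_eq, OfNat.ofNat_ne_zero, not_false_eq_true, zero_pow,
      Finset.sum_const_zero] at this
    refine this.congr fun k => ?_
    simp only [R2, div_pow, Finset.sum_div]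
  have hfq := diff_quot (hf z) (tendsto_const_nhds (x := d)) ht0 htlim
  have hkey : ∀ᶠ k in atTop, ‖u k - d‖ ^ 2 ≤ max ((f (z + t k • d) - f z) / t k +
      c * √((t k) ^ 2 + R2 I F (z + t k • d) / (t k) ^ 2)) 0 := by
    filter_upwards [htlim.eventually (gt_mem_nhds hr)] with k hk
    refine le_max_of_le_left ?_
    have h1 := humin k hmem
    simp only [Set.mem_ofPred_eq, Phi, sub_self, norm_zero] at h1
    have h2 := hu k
    rw [mem_closedBall_iff_norm] at h2
    have h3 := hpen (t k) (u k) (ht0 k) hk (by linarith)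
    have h4 : √(R2 I F (z + t k • u k)) ≤ √((t k) ^ 4 + R2 I F (z + t k • u k)) :=
      Real.sqrt_le_sqrt (by have := pow_pos (ht0 k) 4; linarith)
    have h5 := mul_le_mul_of_nonneg_left h4 hc
    have h6 : √((t k) ^ 4 + R2 I F (z + t k • d)) =
        t k * √((t k) ^ 2 + R2 I F (z + t k • d) / (t k) ^ 2) := by
      have e : (t k) ^ 4 + R2 I F (z + t k • d) =
          (t k) ^ 2 * ((t k) ^ 2 + R2 I F (z + t k • d) / (t k) ^ 2) := by
        have := (ht0 k).ne'
        field_simp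
      rw [e, Real.sqrt_mul (sq_nonneg _), Real.sqrt_sq (ht0 k).le]
    rw [h6] at h1
    have h7 : t k * ‖u k - d‖ ^ 2 ≤ t k * ((f (z + t k • d) - f z) / t k +
      c * √((t k) ^ 2 + R2 I F (z + t k • d) / (t k) ^ 2)) := by
      rw [mul_add, mul_div_cancel₀ _ (ht0 k).ne']
      norm_num at h1
      linarith
    exact le_of_mul_le_mul_left h7 (ht0 k)
  have hud2 : Tendsto (fun k => ‖u k - d‖ ^ 2) atTop (𝓝 0) := by
    refine squeeze_zero' (Eventually.of_forall fun _ => sq_nonneg _) hkey ?_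
    have h1 := (hfq.add ((((htlim.pow 2).add hRq).sqrt).const_mul c)).max
      (tendsto_const_nhds (x := (0:ℝ)))
    simpa [max_eq_right hfd] using h1
  have hud : Tendsto (fun k => u k - d) atTop (𝓝 0) := by
    rw [tendsto_zero_iff_norm_tendsto_zero]
    have := hud2.sqrt
    simpa using this
  have hulim : Tendsto u atTop (𝓝 d) := by simpa using hud.add_const d
  have hzlim : Tendsto (fun k => z + t k • u k) atTop (𝓝 z) := by
    simpa using (htlim.smul hulim).const_add z
  have hpos : ∀ k, 0 < (t k) ^ 4 + R2 I F (z + t k • u k) := fun k => by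
    have := R2_nonneg I F (z + t k • u k)
    have := pow_pos (ht0 k) 4
    linarith
  set l : ℕ → ι → ℝ := fun k i => viol (I i) (F i (z + t k • u k)) /
    √((t k) ^ 4 + R2 I F (z + t k • u k)) with hl
  have hstat : ∀ᶠ k : ℕ in atTop, f' (z + t k • u k) +
      c • ∑ i, l k i • F' i (z + t k • u k) + ((2:ℝ) * 1) • (u k - d) = 0 := by
    have hint : ∀ᶠ k in atTop, u k ∈ Metric.ball d (r / 2) :=
      hulim.eventually (Metric.ball_mem_nhds d (by positivity))
    filter_upwards [hint] with k hi
    have hm : IsLocalMin (Phi I F f z d (t k) c ((t k) ^ 4) 1) (u k) :=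
      (humin k).isLocalMin (Filter.mem_of_superset (Metric.isOpen_ball.mem_nhds hi)
        Metric.ball_subset_closedBall)
    exact stationarity hF hf (ht0 k) (hpos k) hm
  obtain ⟨a, φ, hφ, ha⟩ := extract l (Eventually.of_forall fun k i =>
    ratio_sq_sum I F (z + t k • u k) (by positivity) (hpos k) i)
  have hφt := hφ.tendsto_atTop
  have hai : ∀ i, Tendsto (fun k => l (φ k) i) atTop (𝓝 (a i)) := fun i =>
    (tendsto_pi_nhds.1 ha) i
  have hsgn : ∀ i, I i → 0 ≤ a i := fun i hi =>
    ge_of_tendsto' (hai i) fun k => div_nonneg (viol_nonneg hi _) (Real.sqrt_nonneg _)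
  refine ⟨fun i => c * a i, ?_, fun i hi => mul_nonneg hc (hsgn i hi), ?_⟩
  · have c1 : Tendsto (fun k => f' (z + t k • u k)) atTop (𝓝 (f' z)) :=
      (hf'.tendsto z).comp hzlim
    have c2 : ∀ i, Tendsto (fun k => F' i (z + t k • u k)) atTop (𝓝 (F' i z)) := fun i =>
      ((hF' i).tendsto z).comp hzlim
    have h1 : Tendsto (fun k : ℕ => f' (z + t (φ k) • u (φ k)) +
      c • ∑ i, l (φ k) i • F' i (z + t (φ k) • u (φ k)) +
      ((2:ℝ) * 1) • (u (φ k) - d)) atTop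
      (𝓝 (f' z + c • ∑ i, a i • F' i z + ((2:ℝ) * 1) • (0 : Euc n))) := by
      refine Tendsto.add (Tendsto.add ?_ ?_) ?_
      · exact c1.comp hφt
      · exact (tendsto_finsetSum _ fun i _ => (hai i).smul ((c2 i).comp hφt)).const_smul c
      · exact (hud.comp hφt).const_smul _
    have h2 := tendsto_nhds_unique h1 (tendsto_const_nhds.congr' (by
      filter_upwards [hφt.eventually hstat] with k hk
      exact hk.symm))
    simpa [Finset.smul_sum, smul_smul] using h2
  · intro i hi hne
    have ha0 : 0 < a i := lt_of_le_of_ne (hsgn i hi) fun h => hne (by simp [← h])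
    refine sign_limit (hF i z) (hulim.comp hφt) (fun k => ht0 (φ k)) (htlim.comp hφt)
      (hI i hi).1 (hI i hi).2 (Eventually.frequently ?_)
    filter_upwards [(hai i).eventually (lt_mem_nhds ha0)] with k hk
    have hk' : 0 < viol (I i) (F i (z + t (φ k) • u (φ k))) :=
      (div_pos_iff_of_pos_right (Real.sqrt_pos.2 (hpos (φ k)))).1 hk
    have := viol_mul_pos (l := 1) (I := I i) (by simpa using hk')
    simpa using this

end QNAux

/-- a local minimizer satisfying MPSC quasi-normality in a critical
direction `d` is M-stationary in direction `d`. -/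
theorem mpsc_quasiNormal_M_stationary_dir {n p q m : ℕ} (P : MPSC n p q m) (zs : Euc n)
    (hfeas : zs ∈ P.Feas) (hmin : IsLocalMinOn P.f P.Feas zs)
    (d : Euc n) (hd : d ∈ P.Crit zs) (hqn : P.QuasiNormalDir zs d) :
    P.MStatDir zs d := by
  obtain ⟨hg0, hh0, hGH0⟩ := hfeas
  obtain ⟨⟨dg, dh, dG, dH, dGH⟩, hfd⟩ := hd
  set b : Fin m → Prop := fun i => i ∈ P.IGs zs ∨ i ∈ P.IGd zs d ∨ i ∈ P.IGHd zs d with hb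
  have hbT : ∀ i, b i → P.G i zs = 0 ∧ ⟪P.G' i zs, d⟫_ℝ = 0 := by
    rintro i (h | h | h)
    · exact ⟨h.1, dG i h⟩
    · exact ⟨h.1.1, h.2.1⟩
    · exact ⟨h.1.1, h.2.1⟩
  have hbF : ∀ i, ¬ b i → P.H i zs = 0 ∧ ⟪P.H' i zs, d⟫_ℝ = 0 := by
    intro i hi
    simp only [hb, not_or] at hi
    obtain ⟨h1, h2, h3⟩ := hi
    by_cases hH : P.H i zs = 0
    · refine ⟨hH, ?_⟩
      by_cases hG : P.G i zs = 0
      · have h4 : i ∈ P.IGH zs := ⟨hG, hH⟩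
        by_contra hne
        rcases mul_eq_zero.1 (dGH i h4) with h5 | h5
        · exact h2 ⟨h4, h5, hne⟩
        · exact hne h5
      · exact dH i ⟨hG, hH⟩
    · exact absurd ⟨(mul_eq_zero.1 (hGH0 i)).resolve_right hH, hH⟩ h1
  have hbH : ∀ i, i ∈ P.IHs zs ∪ P.IHd zs d → ¬ b i := by
    rintro i (h | h) hbi
    · exact h.1 (hbT i hbi).1
    · exact h.2.1 (hbT i hbi).2
  have hbG : ∀ i, i ∈ P.IGs zs ∪ P.IGd zs d → b i := by
    rintro i (h | h)
    · exact Or.inl h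
    · exact Or.inr (Or.inl h)
  set E : Fin m → Euc n → ℝ := fun i => if b i then P.G i else P.H i with hE
  set E' : Fin m → Euc n → Euc n := fun i => if b i then P.G' i else P.H' i with hE'
  set F : Fin p ⊕ Fin q ⊕ Fin m → Euc n → ℝ := Sum.elim P.g (Sum.elim P.h E) with hF
  set F' : Fin p ⊕ Fin q ⊕ Fin m → Euc n → Euc n := Sum.elim P.g' (Sum.elim P.h' E') with hF'
  set I : Fin p ⊕ Fin q ⊕ Fin m → Prop := fun i => i.isLeft = true with hI
  have hEsum : ∀ (l : Fin m → ℝ), (∑ i, l i • E' i zs) =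
      ∑ i, ((if b i then l i else 0) • P.G' i zs + (if b i then 0 else l i) • P.H' i zs) := by
    intro l
    refine Finset.sum_congr rfl fun i _ => ?_
    by_cases h : b i <;> simp [hE', h]
  have key := QNAux.nlp (I := I) (F := F) (F' := F') (f := P.f) (f' := P.f') (z := zs) (d := d)
    ?_ ?_ P.grad_f P.cont_f' ?_ ?_ ?_ ?_ hfd
  · obtain ⟨l, h1, h2, h3⟩ := key
    have hlz : ∀ i ∉ P.Igd zs d, l (Sum.inl i) = 0 := by
      intro i hi
      by_contra hne
      exact hi (h3 (Sum.inl i) (by simp [hI]) hne)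
    refine ⟨fun i => l (Sum.inl i), fun j => l (Sum.inr (Sum.inl j)),
      fun i => if b i then l (Sum.inr (Sum.inr i)) else 0,
      fun i => if b i then 0 else l (Sum.inr (Sum.inr i)), ?_,
      fun i _ => h2 (Sum.inl i) (by simp [hI]), hlz, ?_, ?_, ?_⟩
    · have h4 : (∑ i ∈ Finset.univ.filter (fun i => i ∈ P.Igd zs d), l (Sum.inl i) • P.g' i zs)
          = ∑ i, l (Sum.inl i) • P.g' i zs := by
        refine Finset.sum_subset (Finset.filter_subset _ _) fun i _ hi => ?_
        rw [hlz i (by simpa using hi), zero_smul]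
      rw [h4, ← hEsum (fun i => l (Sum.inr (Sum.inr i))), ← h1]
      simp only [Fintype.sum_sum_type, hF', Sum.elim_inl, Sum.elim_inr]
      abel
    · intro i hi
      simp [hbH i hi]
    · intro i hi
      simp [hbG i hi]
    · intro i _
      by_cases h : b i <;> simp [h]
  · rintro (i | j | i) z
    · exact P.grad_g i z
    · exact P.grad_h j z
    · simp only [hF, hF', hE, hE', Sum.elim_inr]
      by_cases h : b i
      · simpa [h] using P.grad_G i z
      · simpa [h] using P.grad_H i z
  · rintro (i | j | i)
    · exact P.cont_g' i
    · exact P.cont_h' j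
    · simp only [hF', hE', Sum.elim_inr]
      by_cases h : b i
      · simpa [h] using P.cont_G' i
      · simpa [h] using P.cont_H' i
  · have h1 := eventually_nhdsWithin_iff.1 hmin
    filter_upwards [h1] with y hy hR
    apply hy
    have hR2 : ∀ i, QNAux.viol (I i) (F i y) = 0 := by
      intro i
      have := (Finset.sum_eq_zero_iff_of_nonneg (fun i _ => sq_nonneg _)).1 hR i (Finset.mem_univ i)
      exact pow_eq_zero_iff (two_ne_zero) |>.1 this
    refine ⟨fun i => ?_, fun j => ?_, fun i => ?_⟩
    · simpa [QNAux.viol, hI, hF] using hR2 (Sum.inl i)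
    · simpa [QNAux.viol, hI, hF] using hR2 (Sum.inr (Sum.inl j))
    · have := hR2 (Sum.inr (Sum.inr i))
      by_cases h : b i
      · simp only [QNAux.viol, hI, hF, hE, Sum.elim_inr, h] at this
        simp at this
        simp [this]
      · simp only [QNAux.viol, hI, hF, hE, Sum.elim_inr, h] at this
        simp at this
        simp [this]
  · rintro l h1 h2 ⟨dk, t, hdk, ht, ht0, hs⟩
    have hlz : ∀ i ∉ P.Igd zs d, l (Sum.inl i) = 0 := by
      intro i hi
      by_contra hne
      refine hi (QNAux.sign_limit (P.grad_g i zs) hdk ht ht0 (hg0 i) (fun h => dg i h)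
        (Eventually.frequently (Eventually.of_forall fun k => ?_)))
      have h3 := hs k (Sum.inl i) hne
      exact (pos_iff_pos_of_mul_pos h3).1 (lt_of_le_of_ne (h2 (Sum.inl i) (by simp [hI])) (Ne.symm hne))
    obtain ⟨r1, r2, r3, r4⟩ := hqn (fun i => l (Sum.inl i)) (fun j => l (Sum.inr (Sum.inl j)))
      (fun i => if b i then l (Sum.inr (Sum.inr i)) else 0)
      (fun i => if b i then 0 else l (Sum.inr (Sum.inr i))) (by
        rw [← hEsum (fun i => l (Sum.inr (Sum.inr i))), ← h1]
        simp only [Fintype.sum_sum_type, hF', Sum.elim_inl, Sum.elim_inr]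
        abel)
      ⟨fun i _ => h2 (Sum.inl i) (by simp [hI]), hlz, fun i hi => by simp [hbG i hi],
        fun i hi => by simp [hbH i hi], fun i _ => by by_cases h : b i <;> simp [h]⟩
      ⟨dk, t, hdk, ht, ht0, fun k => ⟨fun i h => hs k (Sum.inl i) h,
        fun j h => hs k (Sum.inr (Sum.inl j)) h, fun i h => by
          by_cases hi : b i
          · simp only [hi, if_true] at h ⊢
            simpa [hF, hE, hi] using hs k (Sum.inr (Sum.inr i)) h
          · simp [hi] at h, fun i h => by
          by_cases hi : b i
          · simp [hi] at h
          · simp only [hi, if_false] at h ⊢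
            simpa [hF, hE, hi] using hs k (Sum.inr (Sum.inr i)) h⟩⟩
    funext i
    rcases i with i | j | i
    · exact congrFun r1 i
    · exact congrFun r2 j
    · have e3 := congrFun r3 i
      have e4 := congrFun r4 i
      by_cases hi : b i
      · simpa [hi] using e3
      · simpa [hi] using e4
  · rintro (i | j | i) hi
    · exact ⟨hg0 i, fun h => dg i h⟩
    · simp [hI] at hi
    · simp [hI] at hi
  · rintro (i | j | i) hi
    · simp [hI] at hi
    · exact ⟨hh0 j, dh j⟩
    · simp only [hF, hF', hE, hE', Sum.elim_inr]
      by_cases h : b i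
      · simpa [h] using hbT i h
      · simpa [h] using hbF i h
end
end
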